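/- arXiv:1309.1974 — 2 statements merged into one kernel-verified Lean document; each statement's English description precedes it below -/
import Mathlib

section
/- Let 1 ≤ n < α and θ = κ = (n+α)/(n−α). Suppose (u, v) is a pair of positive, everywhere finite, smooth functions on ℝⁿ satisfying u(y) = ∫_{ℝⁿ}|x−y|^{α−n} v(x)^κ dx for all y ∈ ℝⁿ and v(x) = ∫_{ℝⁿ}|x−y|^{α−n} u(y)^θ dy for all x ∈ ℝⁿ. Then there exist constants c₁, c₂ > 0, d > 0 and a point ξ₀ ∈ ℝⁿ such that u(ξ) = c₁·(1/(|ξ−ξ₀|² + d²))^{(n−α)/2} and v(ξ) = c₂·(1/(|ξ−ξ₀|² + d²))^{(n−α)/2} for all ξ ∈ ℝⁿ. -/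
open MeasureTheory ENNReal
open EuclideanGeometry Set Filter Topology

abbrev EE (n : ℕ) := EuclideanSpace ℝ (Fin n)

lemma inv_det {n : ℕ} (k : ℝ) (K : Submodule ℝ (EE n)) [K.HasOrthogonalProjection] :
    |((k • (K.reflection : EE n →L[ℝ] EE n)).det)| = |k| ^ n := by
  have h1 : |LinearMap.det (K.reflection.toLinearMap)| = 1 := by
    rw [Submodule.det_reflection]; simp
  have h2 : (k • (K.reflection : EE n →L[ℝ] EE n)).det
      = LinearMap.det (k • K.reflection.toLinearMap) := rfl
  rw [h2, LinearMap.det_smul, abs_mul, h1, abs_pow]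
  simp

/-- punctured ball -/
def PB {n : ℕ} (c : EE n) (R : ℝ) : Set (EE n) := {x | 0 < dist x c ∧ dist x c < R}

lemma PB_open {n : ℕ} (c : EE n) (R : ℝ) : IsOpen (PB c R) := by
  have hc : Continuous (fun x : EE n => dist x c) := by fun_prop
  exact (isOpen_lt continuous_const hc).inter (isOpen_lt hc continuous_const)

lemma PB_ne {n : ℕ} {c : EE n} {R : ℝ} {x : EE n} (h : x ∈ PB c R) : x ≠ c := dist_pos.1 h.1

lemma inv_image {n : ℕ} (c : EE n) {R : ℝ} (hR : 0 < R) :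
    inversion c R '' PB c R = {x | R < dist x c} := by
  ext x
  constructor
  · rintro ⟨y, hy, rfl⟩
    show R < _
    rw [dist_inversion_center, lt_div_iff₀ hy.1]
    nlinarith [hy.1, hy.2]
  · intro hx
    have hx' : R < dist x c := hx
    have h0 : 0 < dist x c := hR.trans hx'
    refine ⟨inversion c R x, ⟨?_, ?_⟩, inversion_inversion c hR.ne' x⟩
    · rw [dist_inversion_center]; positivity
    · rw [dist_inversion_center, div_lt_iff₀ h0]; nlinarith

lemma inv_deriv {n : ℕ} (c : EE n) (R : ℝ) : ∀ x ∈ PB c R, HasFDerivWithinAt (inversion c R)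
      ((R / dist x c) ^ 2 • ((ℝ ∙ (x - c))ᗮ.reflection : EE n →L[ℝ] EE n)) (PB c R) x :=
  fun _ hx => (hasFDerivAt_inversion (PB_ne hx)).hasFDerivWithinAt

lemma split_ae {n : ℕ} (hn : 1 ≤ n) (c : EE n) (R : ℝ) :
    ((PB c R ∪ {x | R < dist x c} : Set (EE n))) =ᵐ[volume] (univ : Set (EE n)) := by
  have : Nonempty (Fin n) := ⟨⟨0, hn⟩⟩
  rw [ae_eq_univ]
  refine measure_mono_null (t := {c} ∪ Metric.sphere c R) ?_ ?_
  · intro x hx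
    by_cases h : x = c
    · left; exact h
    · right
      have h0 := dist_pos.2 h
      simp only [PB, mem_compl_iff, mem_union, mem_ofPred_eq, not_or, not_and, not_lt] at hx
      exact le_antisymm hx.2 (hx.1 h0)
  · rw [measure_union_null_iff]
    exact ⟨by simp, Measure.addHaar_sphere _ _ _⟩

/-- Change of variables by inversion. -/
lemma inv_cov {n : ℕ} (hn : 1 ≤ n) (c : EE n) {R : ℝ} (hR : 0 < R) (F : EE n → ℝ)
    (hF : Integrable F) :
    IntegrableOn (fun x => ((R / dist x c) ^ 2) ^ n * F (inversion c R x)) (PB c R) ∧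
    ∫ x, F x = ∫ x in PB c R, (F x + ((R / dist x c) ^ 2) ^ n * F (inversion c R x)) := by
  have inj : InjOn (inversion c R) (PB c R) := (inversion_injective c hR.ne').injOn
  have hdet : ∀ x, |((R / dist x c) ^ 2 • ((ℝ ∙ (x - c))ᗮ.reflection : EE n →L[ℝ] EE n)).det|
      = ((R / dist x c) ^ 2) ^ n := by
    intro x; rw [inv_det, abs_of_nonneg (by positivity)]
  have h1 := (integrableOn_image_iff_integrableOn_abs_det_fderiv_smul volume
    (PB_open c R).measurableSet (inv_deriv c R) inj F).1 hF.integrableOn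
  have h2 := integral_image_eq_integral_abs_det_fderiv_smul volume
    (PB_open c R).measurableSet (inv_deriv c R) inj F
  simp only [hdet, smul_eq_mul] at h1 h2
  refine ⟨h1, ?_⟩
  rw [integral_add hF.integrableOn h1, ← h2, inv_image c hR, ← setIntegral_univ,
    ← setIntegral_congr_set (split_ae hn c R), setIntegral_union _ _ hF.integrableOn hF.integrableOn]
  · rw [disjoint_left]; intro x hx hx'; exact lt_asymm hx.2 hx'
  · exact measurableSet_lt measurable_const (by fun_prop)

/-- Kelvin transform -/
noncomputable def kel {n : ℕ} (p : ℝ) (c : EE n) (R : ℝ) (u : EE n → ℝ) (x : EE n) : ℝ :=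
  (dist x c / R) ^ p * u (inversion c R x)

/-- the reflected distance -/
noncomputable def rd {n : ℕ} (c : EE n) (R : ℝ) (x y : EE n) : ℝ :=
  dist y c / R * dist (inversion c R y) x

structure Sys {n : ℕ} (p q : ℝ) (u v : EE n → ℝ) : Prop where
  hn : 1 ≤ n
  hp : 0 < p
  hq : 0 < q
  hpq : p * q = p + 2 * n
  cu : Continuous u
  cv : Continuous v
  pu : ∀ x, 0 < u x
  pv : ∀ x, 0 < v x
  iu : ∀ y, Integrable (fun x => dist x y ^ p * v x ^ (-q))
  eu : ∀ y, u y = ∫ x, dist x y ^ p * v x ^ (-q)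
  iv : ∀ y, Integrable (fun x => dist x y ^ p * u x ^ (-q))
  ev : ∀ y, v y = ∫ x, dist x y ^ p * u x ^ (-q)

lemma Sys.symm {n : ℕ} {p q : ℝ} {u v : EE n → ℝ} (h : Sys p q u v) : Sys p q v u :=
  ⟨h.hn, h.hp, h.hq, h.hpq, h.cv, h.cu, h.pv, h.pu, h.iv, h.ev, h.iu, h.eu⟩

lemma kel_pos {n : ℕ} {p : ℝ} {c : EE n} {R : ℝ} (hR : 0 < R) {u : EE n → ℝ} (pu : ∀ x, 0 < u x)
    {x : EE n} (hx : x ≠ c) : 0 < kel p c R u x := by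
  have := dist_pos.2 hx
  have := pu (inversion c R x)
  unfold kel; positivity

lemma rd_symm {n : ℕ} (c : EE n) {R : ℝ} (hR : 0 < R) {x y : EE n} (hx : x ≠ c) (hy : y ≠ c) :
    rd c R x y = dist x c / R * dist (inversion c R x) y := by
  have h := dist_inversion_mul_dist_center_eq (R := R) hx hy
  unfold rd
  have : dist (inversion c R y) x = dist x (inversion c R y) := dist_comm _ _
  rw [this]
  field_simp
  linarith

lemma rd_sq {n : ℕ} (c : EE n) {R : ℝ} (hR : 0 < R) {x y : EE n} (hy : y ≠ c) :
    rd c R x y ^ 2 - dist x y ^ 2 = (R ^ 2 - dist x c ^ 2) * (R ^ 2 - dist y c ^ 2) / R ^ 2 := by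
  have hy' : 0 < ‖y - c‖ := by rw [norm_pos_iff, sub_ne_zero]; exact hy
  have e1 : dist (inversion c R y) x = ‖(R / ‖y - c‖) ^ 2 • (y - c) - (x - c)‖ := by
    rw [dist_eq_norm, inversion, vsub_eq_sub, vadd_eq_add, dist_eq_norm]; congr 1; abel
  have e2 : dist x y = ‖(x - c) - (y - c)‖ := by rw [dist_eq_norm]; congr 1; abel
  unfold rd
  rw [e1, e2, dist_eq_norm x c, dist_eq_norm y c]
  generalize x - c = X
  generalize y - c = Y at hy' ⊢
  rw [mul_pow, norm_sub_sq_real, norm_sub_sq_real,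
    norm_smul, inner_smul_left, real_inner_comm X Y, Real.norm_of_nonneg (by positivity)]
  simp only [conj_trivial]
  field_simp
  ring

lemma rd_gt {n : ℕ} (c : EE n) {R : ℝ} {x y : EE n} (hx : x ∈ PB c R) (hy : y ∈ PB c R) :
    dist x y < rd c R x y := by
  have hR : 0 < R := hx.1.trans hx.2
  have h := rd_sq c hR (x := x) (PB_ne hy)
  have h2 : 0 < (R ^ 2 - dist x c ^ 2) * (R ^ 2 - dist y c ^ 2) / R ^ 2 := by
    have a := hx.1; have b := hx.2; have a' := hy.1; have b' := hy.2
    have : 0 < R ^ 2 - dist x c ^ 2 := by nlinarith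
    have : 0 < R ^ 2 - dist y c ^ 2 := by nlinarith
    positivity
  have h3 : 0 ≤ rd c R x y := by unfold rd; positivity
  exact lt_of_pow_lt_pow_left₀ 2 h3 (by linarith)

lemma rd_le {n : ℕ} (c : EE n) {R : ℝ} {x y : EE n} (hx : x ∈ PB c R) (hy : y ∈ PB c R) :
    rd c R x y ≤ 2 * R := by
  have hR : 0 < R := hx.1.trans hx.2
  have h1 := dist_triangle_right (inversion c R y) x c
  rw [dist_inversion_center] at h1
  have hy1 := hy.1
  unfold rd
  calc dist y c / R * dist (inversion c R y) x
      ≤ dist y c / R * (R ^ 2 / dist y c + dist x c) := by gcongr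
    _ = R + dist y c / R * dist x c := by field_simp
    _ ≤ R + R / R * R := by gcongr; exact hy.2.le; exact hx.2.le
    _ = 2 * R := by field_simp; ring

lemma jac_id {n : ℕ} {p q : ℝ} {v : EE n → ℝ} (pv : ∀ x, 0 < v x)
    (hpq : p * q = p + 2 * n) (c : EE n) {R : ℝ} (hR : 0 < R) {x y : EE n} (hy : y ≠ c) :
    ((R / dist y c) ^ 2) ^ n * (dist (inversion c R y) x ^ p * v (inversion c R y) ^ (-q))
      = rd c R x y ^ p * kel p c R v y ^ (-q) := by
  have hd := dist_pos.2 hy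
  set s := dist y c / R with hs
  have hs0 : 0 < s := by positivity
  have e : R / dist y c = s⁻¹ := by rw [hs]; field_simp
  have e2 : ((s⁻¹) ^ 2) ^ n = s ^ (-(2 * n : ℝ)) := by
    rw [Real.rpow_neg hs0.le, inv_pow, inv_pow, ← pow_mul]
    congr 1
    rw [← Real.rpow_natCast]; push_cast; rfl
  unfold rd kel
  rw [e, e2, ← hs, Real.mul_rpow hs0.le dist_nonneg,
    Real.mul_rpow (by positivity) (pv _).le, ← Real.rpow_mul hs0.le]
  have e3 : s ^ (-(2 * n : ℝ)) = s ^ p * s ^ (p * -q) := by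
    rw [← Real.rpow_add hs0]; congr 1; linarith
  rw [e3]; ring

lemma u_split {n : ℕ} {p q : ℝ} {u v : EE n → ℝ} (h : Sys p q u v) (c : EE n) {R : ℝ} (hR : 0 < R)
    (x : EE n) :
    IntegrableOn (fun y => dist x y ^ p * v y ^ (-q) + rd c R x y ^ p * kel p c R v y ^ (-q)) (PB c R)
    ∧ u x = ∫ y in PB c R, (dist x y ^ p * v y ^ (-q) + rd c R x y ^ p * kel p c R v y ^ (-q)) := by
  obtain ⟨h1, h2⟩ := inv_cov h.hn c hR _ (h.iu x)
  rw [← h.eu] at h2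
  have key : ∀ y ∈ PB c R, dist y x ^ p * v y ^ (-q) + ((R / dist y c) ^ 2) ^ n *
      (dist (inversion c R y) x ^ p * v (inversion c R y) ^ (-q)) =
      dist x y ^ p * v y ^ (-q) + rd c R x y ^ p * kel p c R v y ^ (-q) := by
    intro y hy
    rw [jac_id h.pv h.hpq c hR (PB_ne hy), dist_comm]
  constructor
  · refine IntegrableOn.congr_fun ((h.iu x).integrableOn.add h1) ?_ (PB_open c R).measurableSet
    intro y hy
    exact key y hy
  · rw [h2]
    exact setIntegral_congr_fun (PB_open c R).measurableSet key

lemma kel_split {n : ℕ} {p q : ℝ} {u v : EE n → ℝ} (h : Sys p q u v) (c : EE n) {R : ℝ} (hR : 0 < R)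
    {x : EE n} (hx : x ≠ c) :
    IntegrableOn (fun y => rd c R x y ^ p * v y ^ (-q) + dist x y ^ p * kel p c R v y ^ (-q)) (PB c R)
    ∧ kel p c R u x =
      ∫ y in PB c R, (rd c R x y ^ p * v y ^ (-q) + dist x y ^ p * kel p c R v y ^ (-q)) := by
  obtain ⟨h1, h2⟩ := u_split h c hR (inversion c R x)
  have hd := dist_pos.2 hx
  have key : ∀ y ∈ PB c R, (dist x c / R) ^ p * (dist (inversion c R x) y ^ p * v y ^ (-q) +
      rd c R (inversion c R x) y ^ p * kel p c R v y ^ (-q)) =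
      rd c R x y ^ p * v y ^ (-q) + dist x y ^ p * kel p c R v y ^ (-q) := by
    intro y hy
    have hyc := PB_ne hy
    have hyd := hy.1
    have e1 : dist x y = dist x c / R * rd c R (inversion c R x) y := by
      unfold rd
      rw [dist_inversion_inversion hyc hx, dist_comm y x]
      field_simp
    rw [rd_symm c hR hx hyc, e1, Real.mul_rpow (by positivity) dist_nonneg,
      Real.mul_rpow (by positivity) (by unfold rd; positivity)]
    ring
  constructor
  · refine IntegrableOn.congr_fun (h1.const_mul ((dist x c / R) ^ p)) ?_ (PB_open c R).measurableSet
    intro y hy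
    exact key y hy
  · unfold kel
    rw [h2, ← integral_const_mul]
    exact setIntegral_congr_fun (PB_open c R).measurableSet key

/-- The basic identity. -/
lemma diff_id {n : ℕ} {p q : ℝ} {u v : EE n → ℝ} (h : Sys p q u v) (c : EE n) {R : ℝ} (hR : 0 < R)
    {x : EE n} (hx : x ≠ c) :
    IntegrableOn (fun y => (rd c R x y ^ p - dist x y ^ p) *
      (v y ^ (-q) - kel p c R v y ^ (-q))) (PB c R)
    ∧ kel p c R u x - u x =
      ∫ y in PB c R, (rd c R x y ^ p - dist x y ^ p) * (v y ^ (-q) - kel p c R v y ^ (-q)) := by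
  obtain ⟨h1, h2⟩ := u_split h c hR x
  obtain ⟨h3, h4⟩ := kel_split h c hR hx
  have key : (fun y => (rd c R x y ^ p * v y ^ (-q) + dist x y ^ p * kel p c R v y ^ (-q)) -
     (dist x y ^ p * v y ^ (-q) + rd c R x y ^ p * kel p c R v y ^ (-q)))
     = (fun y => (rd c R x y ^ p - dist x y ^ p) * (v y ^ (-q) - kel p c R v y ^ (-q))) := by
    ext y; ring
  constructor
  · rw [← key]; exact h3.sub h1
  · rw [h4, h2, ← key, ← integral_sub h3 h1]

lemma tangent_ineq {a b q : ℝ} (ha : 0 < a) (hb : 0 < b) (hq : 0 < q) :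
    a ^ (-q) - b ^ (-q) ≤ q * a ^ (-q - 1) * (b - a) := by
  have h1 : b ^ (-q) = a ^ (-q) * Real.exp (-q * Real.log (b / a)) := by
    rw [Real.log_div hb.ne' ha.ne', Real.rpow_def_of_pos ha, Real.rpow_def_of_pos hb, ← Real.exp_add]
    congr 1; ring
  have h2 := Real.add_one_le_exp (-q * Real.log (b / a))
  have h3 := Real.log_le_sub_one_of_pos (div_pos hb ha)
  have h4 : 1 - q * (b / a - 1) ≤ Real.exp (-q * Real.log (b / a)) := by nlinarith
  have h5 : a ^ (-q - 1) = a ^ (-q) / a := by rw [Real.rpow_sub_one ha.ne']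
  have h6 : 0 < a ^ (-q) := by positivity
  rw [h1, h5]
  have h7 : q * (a ^ (-q) / a) * (b - a) = a ^ (-q) * (q * (b / a - 1)) := by field_simp
  rw [h7]
  nlinarith [mul_le_mul_of_nonneg_left h4 h6.le]

lemma kel_cont {n : ℕ} {p : ℝ} {u : EE n → ℝ} (cu : Continuous u) (c : EE n) {R : ℝ} (hR : 0 < R) :
    ContinuousOn (kel p c R u) (PB c R) := by
  unfold kel
  apply ContinuousOn.mul
  · apply ContinuousOn.rpow_const
    · fun_prop
    · intro x hx; left
      have := hx.1
      positivity
  · apply cu.comp_continuousOn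
    exact ContinuousOn.inversion continuousOn_const continuousOn_const continuousOn_id
      (fun x hx => PB_ne hx)

def SS {n : ℕ} (p : ℝ) (c : EE n) (R : ℝ) (v : EE n → ℝ) : Set (EE n) :=
  {y | y ∈ PB c R ∧ v y < kel p c R v y}

lemma SS_open {n : ℕ} {p : ℝ} {v : EE n → ℝ} (cv : Continuous v) (c : EE n) {R : ℝ} (hR : 0 < R) :
    IsOpen (SS p c R v) := by
  have := ((kel_cont (p := p) cv c hR).sub cv.continuousOn).isOpen_inter_preimage (PB_open c R)
    (isOpen_Ioi (a := (0 : ℝ)))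
  convert this using 1
  ext y
  simp [SS]

lemma SS_fin {n : ℕ} {p : ℝ} {v : EE n → ℝ} (c : EE n) {R : ℝ} :
    volume (SS p c R v) < ∞ :=
  (measure_mono (fun _ hy => hy.1.2)).trans_lt (measure_ball_lt_top (x := c) (r := R))

lemma contr {n : ℕ} {p q : ℝ} {u v : EE n → ℝ} (h : Sys p q u v) (c : EE n) {R : ℝ} (hR : 0 < R)
    {m : ℝ} (hm : 0 < m) (hv : ∀ y ∈ PB c R, m ≤ v y) {M : ℝ} (hM0 : 0 ≤ M)
    (hM : ∀ y ∈ PB c R, kel p c R v y - v y ≤ M) {x : EE n} (hx : x ∈ PB c R) :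
    kel p c R u x - u x ≤ (2 * R) ^ p * (q * m ^ (-q - 1)) * volume.real (SS p c R v) * M := by
  obtain ⟨h1, h2⟩ := diff_id h c hR (PB_ne hx)
  have hq := h.hq
  have hp := h.hp
  rw [h2]
  have hms := (SS_open (p := p) h.cv c hR).measurableSet
  have hK : 0 ≤ (2 * R) ^ p * (q * m ^ (-q - 1)) * M := by positivity
  calc _ ≤ ∫ y in PB c R, (SS p c R v).indicator
        (fun _ => (2 * R) ^ p * (q * m ^ (-q - 1)) * M) y := by
        apply setIntegral_mono_on h1 _ (PB_open c R).measurableSet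
        · intro y hy
          have hgt := rd_gt c hx hy
          have hle := rd_le c hx hy
          have k0 : 0 ≤ rd c R x y ^ p - dist x y ^ p := by
            rw [sub_nonneg]; exact Real.rpow_le_rpow dist_nonneg hgt.le hp.le
          have k1 : rd c R x y ^ p - dist x y ^ p ≤ (2 * R) ^ p := by
            have : rd c R x y ^ p ≤ (2 * R) ^ p :=
              Real.rpow_le_rpow (dist_nonneg.trans hgt.le) hle hp.le
            have : 0 ≤ dist x y ^ p := by positivity
            linarith
          have hkp := kel_pos (p := p) hR h.pv (PB_ne hy)
          by_cases hS : y ∈ SS p c R v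
          · rw [indicator_of_mem hS, mul_assoc]
            have t := tangent_ineq (h.pv y) hkp hq
            have e : v y ^ (-q - 1) ≤ m ^ (-q - 1) :=
              Real.rpow_le_rpow_of_nonpos hm (hv y hy) (by linarith)
            have hd : 0 ≤ kel p c R v y - v y := by have := hS.2; linarith
            have t2 : q * v y ^ (-q - 1) * (kel p c R v y - v y) ≤ q * m ^ (-q - 1) * M := by
              have := hM y hy
              gcongr
            refine (mul_le_mul_of_nonneg_left (t.trans t2) k0).trans ?_
            gcongr
          · rw [indicator_of_notMem hS]
            apply mul_nonpos_of_nonneg_of_nonpos k0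
            have hle' : kel p c R v y ≤ v y := by
              by_contra hh; exact hS ⟨hy, not_le.1 hh⟩
            have := Real.rpow_le_rpow_of_nonpos hkp hle' (by linarith : -q ≤ 0)
            linarith
        · apply Integrable.integrableOn
          rw [integrable_indicator_iff hms]
          exact integrableOn_const (SS_fin c).ne
    _ = _ := by
        rw [setIntegral_indicator hms, setIntegral_const]
        have : PB c R ∩ SS p c R v = SS p c R v := inter_eq_right.2 (fun y hy => hy.1)
        rw [this, smul_eq_mul]; ring

lemma wint {n : ℕ} {p q : ℝ} {u v : EE n → ℝ} (h : Sys p q u v) (c : EE n) :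
    Integrable (fun x => (1 + dist x c) ^ p * v x ^ (-q)) := by
  have hp := h.hp
  set e : EE n := c + EuclideanSpace.single ⟨0, h.hn⟩ (1 : ℝ) with he
  have hce : dist c e = 1 := by simp [he]
  have hi := ((h.iu c).add (h.iu e)).const_mul ((3 : ℝ) ^ p)
  refine Integrable.mono' hi ?_ ?_
  · apply Continuous.aestronglyMeasurable
    apply Continuous.mul
    · exact Continuous.rpow_const (by fun_prop) (fun x => Or.inr hp.le)
    · exact Continuous.rpow_const h.cv (fun x => Or.inl (h.pv x).ne')
  · filter_upwards with x
    have hv := h.pv x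
    have hvq : 0 < v x ^ (-q) := by positivity
    rw [Real.norm_of_nonneg (by positivity)]
    simp only [Pi.add_apply]
    rw [← add_mul, ← mul_assoc]
    gcongr
    have t := dist_triangle_left c e x
    rw [hce] at t
    have hx0 : 0 ≤ dist x c := dist_nonneg
    have hx1 : 0 ≤ dist x e := dist_nonneg
    rcases le_total (dist x c) (dist x e) with hh | hh
    · calc (1 + dist x c) ^ p ≤ (3 * dist x e) ^ p := by gcongr; linarith
        _ = 3 ^ p * dist x e ^ p := Real.mul_rpow (by norm_num) hx1
        _ ≤ _ := by gcongr; have : 0 ≤ dist x c ^ p := by positivity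
                    linarith
    · calc (1 + dist x c) ^ p ≤ (3 * dist x c) ^ p := by gcongr; linarith
        _ = 3 ^ p * dist x c ^ p := Real.mul_rpow (by norm_num) hx0
        _ ≤ _ := by gcongr; have : 0 ≤ dist x e ^ p := by positivity
                    linarith

lemma ubd {n : ℕ} {p q : ℝ} {u v : EE n → ℝ} (h : Sys p q u v) (c : EE n) :
    ∃ C, 0 ≤ C ∧ ∀ y, u y ≤ C * (1 + dist y c) ^ p := by
  have hp := h.hp
  refine ⟨∫ x, (1 + dist x c) ^ p * v x ^ (-q), integral_nonneg fun x => ?_, fun y => ?_⟩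
  · have hv := h.pv x
    show 0 ≤ (1 + dist x c) ^ p * v x ^ (-q)
    positivity
  · rw [h.eu, mul_comm, ← integral_const_mul]
    apply integral_mono (h.iu y) ((wint h c).const_mul _)
    intro x
    have hv := h.pv x
    show dist x y ^ p * v x ^ (-q) ≤ (1 + dist y c) ^ p * ((1 + dist x c) ^ p * v x ^ (-q))
    rw [← mul_assoc, ← Real.mul_rpow (by positivity) (by positivity)]
    have h0 : 0 ≤ dist x c := dist_nonneg
    have h1 : 0 ≤ dist y c := dist_nonneg
    have := dist_triangle_right x y c
    gcongr
    nlinarith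

/-- total mass -/
noncomputable def mass {n : ℕ} (q : ℝ) (v : EE n → ℝ) : ℝ := ∫ x, v x ^ (-q)

lemma mint {n : ℕ} {p q : ℝ} {u v : EE n → ℝ} (h : Sys p q u v) :
    Integrable (fun x => v x ^ (-q)) := by
  have hp := h.hp
  refine Integrable.mono' (wint h 0) ?_ ?_
  · exact (Continuous.rpow_const h.cv (fun x => Or.inl (h.pv x).ne')).aestronglyMeasurable
  · filter_upwards with x
    have hv := h.pv x
    have hvq : 0 < v x ^ (-q) := by positivity
    rw [Real.norm_of_nonneg (by positivity)]
    have : (1 : ℝ) ≤ (1 + dist x 0) ^ p := Real.one_le_rpow (by simp) hp.le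
    nlinarith

lemma mass_pos {n : ℕ} {p q : ℝ} {u v : EE n → ℝ} (h : Sys p q u v) : 0 < mass q v := by
  unfold mass
  rw [integral_pos_iff_support_of_nonneg (fun x => (Real.rpow_pos_of_pos (h.pv x) _).le) (mint h)]
  have : Function.support (fun x => v x ^ (-q)) = univ := by
    ext x; simp [(Real.rpow_pos_of_pos (h.pv x) (-q)).ne']
  rw [this]
  exact isOpen_univ.measure_pos _ univ_nonempty

lemma asy {n : ℕ} {p q : ℝ} {u v : EE n → ℝ} (h : Sys p q u v) (c : EE n) :
    Tendsto (fun y => u y / dist y c ^ p) (Bornology.cobounded (EE n)) (𝓝 (mass q v)) := by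
  have hp := h.hp
  have hcob : Tendsto (fun y => dist y c) (Bornology.cobounded (EE n)) atTop :=
    Metric.tendsto_dist_right_cobounded_atTop c
  have e : (fun y => u y / dist y c ^ p) =
      fun y => ∫ x, dist x y ^ p / dist y c ^ p * v x ^ (-q) := by
    ext y
    rw [h.eu, ← integral_div]
    congr 1; ext x; ring
  rw [e]
  unfold mass
  have : (Bornology.cobounded (EE n)).IsCountablyGenerated := by
    rw [← Metric.comap_dist_right_atTop c]; infer_instance
  apply tendsto_integral_filter_of_dominated_convergence _ _ _ (wint h c)
  · filter_upwards with x
    have hl : Tendsto (fun y => (dist x y / dist y c) ^ p * v x ^ (-q)) (Bornology.cobounded (EE n))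
        (𝓝 (1 ^ p * v x ^ (-q))) := by
      apply Filter.Tendsto.mul_const
      apply Tendsto.rpow_const _ (Or.inl one_ne_zero)
      have b : Tendsto (fun y => dist x c / dist y c) (Bornology.cobounded (EE n)) (𝓝 0) :=
        hcob.const_div_atTop _
      have b1 : Tendsto (fun y => 1 - dist x c / dist y c) (Bornology.cobounded (EE n)) (𝓝 1) := by
        simpa using tendsto_const_nhds.sub b
      have b2 : Tendsto (fun y => 1 + dist x c / dist y c) (Bornology.cobounded (EE n)) (𝓝 1) := by
        simpa using tendsto_const_nhds.add b
      apply tendsto_of_tendsto_of_tendsto_of_le_of_le' b1 b2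
      · filter_upwards [hcob.eventually_gt_atTop 0] with y hy
        rw [le_div_iff₀ hy, sub_mul, div_mul_cancel₀ _ hy.ne']
        have := dist_triangle_left y c x
        linarith
      · filter_upwards [hcob.eventually_gt_atTop 0] with y hy
        rw [div_le_iff₀ hy, add_mul, div_mul_cancel₀ _ hy.ne']
        have := dist_triangle_right x y c
        linarith
    rw [Real.one_rpow, one_mul] at hl
    refine hl.congr fun y => ?_
    rw [Real.div_rpow dist_nonneg dist_nonneg]
  · filter_upwards with y
    apply Continuous.aestronglyMeasurable
    apply Continuous.mul
    · apply Continuous.div_const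
      exact Continuous.rpow_const (by fun_prop) (fun x => Or.inr hp.le)
    · exact Continuous.rpow_const h.cv (fun x => Or.inl (h.pv x).ne')
  · filter_upwards [hcob.eventually_ge_atTop 1] with y hy
    filter_upwards with x
    have hv := h.pv x
    rw [Real.norm_of_nonneg (by positivity)]
    gcongr
    rw [← Real.div_rpow dist_nonneg dist_nonneg]
    have h0 : 0 ≤ dist x c := dist_nonneg
    gcongr
    rw [div_le_iff₀ (by linarith)]
    have := dist_triangle_right x y c
    nlinarith

lemma kel_lim {n : ℕ} {p q : ℝ} {u v : EE n → ℝ} (h : Sys p q u v) (c : EE n) {R : ℝ} (hR : 0 < R) :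
    Tendsto (kel p c R u) (𝓝[≠] c) (𝓝 (mass q v * R ^ p)) := by
  have t := ((asy h c).comp (tendsto_inversion_nhdsNE_center_cobounded (c := c) hR.ne')).mul_const
    (R ^ p)
  refine t.congr' ?_
  filter_upwards [self_mem_nhdsWithin] with x hx
  have hd : 0 < dist x c := dist_pos.2 hx
  simp only [Function.comp_apply, kel, dist_inversion_center]
  have e1 : R ^ 2 / dist x c = R * (dist x c / R)⁻¹ := by field_simp
  have e2 : 0 < dist x c / R := by positivity
  rw [e1, Real.mul_rpow hR.le (by positivity), Real.inv_rpow e2.le]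
  have : 0 < R ^ p := by positivity
  have : 0 < (dist x c / R) ^ p := by positivity
  field_simp

lemma kel_bd {n : ℕ} {p q : ℝ} {u v : EE n → ℝ} (h : Sys p q u v) (c : EE n) {R : ℝ} (hR : 0 < R) :
    ∃ C, 0 ≤ C ∧ ∀ x ∈ PB c R, kel p c R u x - u x ≤ C := by
  have hp := h.hp
  obtain ⟨C, hC0, hC⟩ := ubd h c
  refine ⟨C * (1 + R) ^ p, by positivity, fun x hx => ?_⟩
  have hu := h.pu x
  have hd := hx.1
  have h1 := hC (inversion c R x)
  rw [dist_inversion_center] at h1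
  have h2 : kel p c R u x ≤ C * (1 + R) ^ p := by
    unfold kel
    calc _ ≤ (dist x c / R) ^ p * (C * (1 + R ^ 2 / dist x c) ^ p) := by gcongr
      _ = C * (dist x c / R * (1 + R ^ 2 / dist x c)) ^ p := by
        rw [Real.mul_rpow (by positivity) (by positivity)]; ring
      _ ≤ C * (1 + R) ^ p := by
        gcongr
        have : dist x c / R * (1 + R ^ 2 / dist x c) = dist x c / R + R := by field_simp
        rw [this]
        gcongr
        rw [div_le_one hR]; exact hx.2.le
  linarith

lemma narrow {n : ℕ} {p q : ℝ} {u v : EE n → ℝ} (h : Sys p q u v) (c : EE n) {R : ℝ} (hR : 0 < R)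
    {m : ℝ} (hm : 0 < m) (hu : ∀ y ∈ PB c R, m ≤ u y) (hv : ∀ y ∈ PB c R, m ≤ v y)
    (su : (2 * R) ^ p * (q * m ^ (-q - 1)) * volume.real (SS p c R u) ≤ 1 / 2)
    (sv : (2 * R) ^ p * (q * m ^ (-q - 1)) * volume.real (SS p c R v) ≤ 1 / 2) :
    ∀ x ∈ PB c R, kel p c R u x ≤ u x ∧ kel p c R v x ≤ v x := by
  obtain ⟨C1, hC1, h1⟩ := kel_bd h c hR
  obtain ⟨C2, hC2, h2⟩ := kel_bd h.symm c hR
  set C := max C1 C2 with hC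
  have hC0 : 0 ≤ C := hC1.trans (le_max_left _ _)
  have key : ∀ k : ℕ, ∀ x ∈ PB c R, kel p c R u x - u x ≤ C * (1 / 2) ^ k ∧
      kel p c R v x - v x ≤ C * (1 / 2) ^ k := by
    intro k
    induction k with
    | zero =>
      intro x hx
      simp only [pow_zero, mul_one]
      exact ⟨(h1 x hx).trans (le_max_left _ _), (h2 x hx).trans (le_max_right _ _)⟩
    | succ k ih =>
      intro x hx
      have hM : 0 ≤ C * (1 / 2) ^ k := by positivity
      have a1 := contr h c hR hm hv hM (fun y hy => (ih y hy).2) hx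
      have a2 := contr h.symm c hR hm hu hM (fun y hy => (ih y hy).1) hx
      have b1 := mul_le_mul_of_nonneg_right sv hM
      have b2 := mul_le_mul_of_nonneg_right su hM
      rw [pow_succ]
      constructor <;> linarith
  have lim : Tendsto (fun k : ℕ => C * (1 / 2 : ℝ) ^ k) atTop (𝓝 0) := by
    simpa using (tendsto_pow_atTop_nhds_zero_of_lt_one (by norm_num : (0 : ℝ) ≤ 1 / 2)
      (by norm_num)).const_mul C
  intro x hx
  have c1 := ge_of_tendsto' lim (fun k => (key k x hx).1)
  have c2 := ge_of_tendsto' lim (fun k => (key k x hx).2)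
  constructor <;> linarith

lemma kel_R_cont {n : ℕ} {p : ℝ} {u : EE n → ℝ} (cu : Continuous u) {c x : EE n}
    (hx : x ≠ c) {R : ℝ} (hR : 0 < R) : ContinuousAt (fun r => kel p c r u x) R := by
  have hd := dist_pos.2 hx
  unfold kel
  apply ContinuousAt.mul
  · apply ContinuousAt.rpow_const
    · exact continuousAt_const.div continuousAt_id hR.ne'
    · left; positivity
  · apply cu.continuousAt.comp
    exact ContinuousAt.inversion continuousAt_const continuousAt_id continuousAt_const hx

lemma SS_tendsto {n : ℕ} {p : ℝ} {v : EE n → ℝ} (hn : 1 ≤ n) (cv : Continuous v) (c : EE n) {R : ℝ}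
    (hs : ∀ x ∈ PB c R, kel p c R v x < v x) :
    Tendsto (fun r => volume.real (SS p c r v)) (𝓝[>] R) (𝓝 0) := by
  have : Nonempty (Fin n) := ⟨⟨0, hn⟩⟩
  have t : Tendsto (fun r => volume (SS p c r v)) (𝓝[>] R) (𝓝 (volume (∅ : Set (EE n)))) := by
    apply tendsto_measure_of_ae_tendsto_indicator (B := Metric.ball c (R + 1)) _
      MeasurableSet.empty _ measurableSet_ball measure_ball_lt_top.ne
    · have : Ioo R (R + 1) ∈ 𝓝[>] R := Ioo_mem_nhdsGT (by linarith)
      filter_upwards [this] with r hr y hy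
      exact hy.1.2.trans hr.2
    · have h0 : volume ({c} ∪ Metric.sphere c R : Set (EE n)) = 0 := by
        rw [measure_union_null_iff]
        exact ⟨by simp, Measure.addHaar_sphere _ _ _⟩
      have h1 := measure_eq_zero_iff_ae_notMem.1 h0
      filter_upwards [h1] with x hx
      simp only [mem_union, mem_singleton_iff, Metric.mem_sphere, not_or] at hx
      simp only [mem_empty_iff_false, iff_false]
      have hd := dist_pos.2 hx.1
      rcases lt_or_gt_of_ne hx.2 with hl | hl
      · have hR : 0 < R := hd.trans hl
        have := (kel_R_cont (p := p) cv hx.1 hR).eventually_lt continuousAt_const (hs x ⟨hd, hl⟩)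
        filter_upwards [this.filter_mono nhdsWithin_le_nhds] with r hr hS
        exact lt_asymm hr hS.2
      · have : Ioo R (dist x c) ∈ 𝓝[>] R := Ioo_mem_nhdsGT hl
        filter_upwards [this] with r hr hS
        exact lt_asymm hr.2 hS.1.2
    · intro r
      by_cases hr : 0 < r
      · exact (SS_open cv c hr).measurableSet
      · have : SS p c r v = ∅ := by
          ext y
          simp only [mem_empty_iff_false, iff_false]
          intro hy
          exact hr (hy.1.1.trans hy.1.2)
        rw [this]; exact MeasurableSet.empty
  rw [measure_empty] at t
  have := (ENNReal.tendsto_toReal ENNReal.zero_ne_top).comp t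
  simpa [Function.comp_def, Measure.real] using this

lemma advance {n : ℕ} {p q : ℝ} {u v : EE n → ℝ} (h : Sys p q u v) (c : EE n) {R : ℝ} (hR : 0 ≤ R)
    (hs : ∀ x ∈ PB c R, kel p c R u x < u x ∧ kel p c R v x < v x) :
    ∃ r, R < r ∧ ∀ x ∈ PB c r, kel p c r u x ≤ u x ∧ kel p c r v x ≤ v x := by
  have hp := h.hp
  have hq := h.hq
  have hne : (Metric.closedBall c (R + 1)).Nonempty := ⟨c, by simp; linarith⟩
  obtain ⟨x1, _, h1⟩ := (isCompact_closedBall c (R + 1)).exists_isMinOn hne h.cu.continuousOn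
  obtain ⟨x2, _, h2⟩ := (isCompact_closedBall c (R + 1)).exists_isMinOn hne h.cv.continuousOn
  set m := min (u x1) (v x2) with hm
  have hm0 : 0 < m := lt_min (h.pu _) (h.pv _)
  set K := (2 * (R + 1)) ^ p * (q * m ^ (-q - 1)) with hK
  have hK0 : 0 ≤ K := by positivity
  have t1 := (SS_tendsto h.hn h.cu c (fun x hx => (hs x hx).1)).const_mul K
  have t2 := (SS_tendsto h.hn h.cv c (fun x hx => (hs x hx).2)).const_mul K
  rw [mul_zero] at t1 t2
  have e1 := t1.eventually_le_const (by norm_num : (0 : ℝ) < 1 / 2)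
  have e2 := t2.eventually_le_const (by norm_num : (0 : ℝ) < 1 / 2)
  have e3 : Ioo R (R + 1) ∈ 𝓝[>] R := Ioo_mem_nhdsGT (by linarith)
  obtain ⟨r, hr1, hr2, hr⟩ := (e1.and (e2.and e3)).exists
  have hr0 : 0 < r := lt_of_le_of_lt hR hr.1
  have hrK : (2 * r) ^ p * (q * m ^ (-q - 1)) ≤ K := by
    rw [hK]; have := hr.2.le; gcongr
  refine ⟨r, hr.1, narrow h c hr0 hm0 ?_ ?_ ?_ ?_⟩
  · intro y hy
    exact (min_le_left _ _).trans (h1 (Metric.mem_closedBall.2 (hy.2.trans hr.2).le))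
  · intro y hy
    exact (min_le_right _ _).trans (h2 (Metric.mem_closedBall.2 (hy.2.trans hr.2).le))
  · exact (mul_le_mul_of_nonneg_right hrK measureReal_nonneg).trans hr1
  · exact (mul_le_mul_of_nonneg_right hrK measureReal_nonneg).trans hr2

lemma strict {n : ℕ} {p q : ℝ} {u v : EE n → ℝ} (h : Sys p q u v) (c : EE n) {R : ℝ} (hR : 0 < R)
    (hle : ∀ x ∈ PB c R, kel p c R v x ≤ v x) {x0 : EE n} (hx0 : x0 ∈ PB c R)
    (hlt : kel p c R v x0 < v x0) : ∀ x ∈ PB c R, kel p c R u x < u x := by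
  intro x hx
  have hp := h.hp
  have hq := h.hq
  obtain ⟨h1, h2⟩ := diff_id h c hR (PB_ne hx)
  have hk : ∀ y ∈ PB c R, 0 < rd c R x y ^ p - dist x y ^ p := by
    intro y hy
    rw [sub_pos]; exact Real.rpow_lt_rpow dist_nonneg (rd_gt c hx hy) hp
  have hms := (PB_open c R).measurableSet
  have hpos : 0 < ∫ y in PB c R, -((rd c R x y ^ p - dist x y ^ p) *
      (v y ^ (-q) - kel p c R v y ^ (-q))) := by
    have h1n : IntegrableOn (fun y => -((rd c R x y ^ p - dist x y ^ p) *
      (v y ^ (-q) - kel p c R v y ^ (-q)))) (PB c R) := h1.neg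
    rw [setIntegral_pos_iff_support_of_nonneg_ae _ h1n]
    · have hopen := ((h.cv.continuousOn).sub (kel_cont (p := p) h.cv c hR)).isOpen_inter_preimage
        (PB_open c R) (isOpen_Ioi (a := (0 : ℝ)))
      refine (hopen.measure_pos volume ⟨x0, hx0, ?_⟩).trans_le (measure_mono ?_)
      · simpa using hlt
      · rintro y ⟨hy, hy2⟩
        refine ⟨?_, hy⟩
        have hy3 : kel p c R v y < v y := by simpa using hy2
        have := Real.rpow_lt_rpow_of_neg (kel_pos (p := p) hR h.pv (PB_ne hy)) hy3
          (by linarith : -q < 0)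
        have hky := hk y hy
        rw [Function.mem_support, neg_ne_zero]
        exact mul_ne_zero hky.ne' (by linarith)
    · filter_upwards [ae_restrict_mem hms] with y hy
      have := Real.rpow_le_rpow_of_nonpos (kel_pos (p := p) hR h.pv (PB_ne hy)) (hle y hy)
          (by linarith : -q ≤ 0)
      have hky := hk y hy
      show 0 ≤ -((rd c R x y ^ p - dist x y ^ p) * (v y ^ (-q) - kel p c R v y ^ (-q)))
      nlinarith
  rw [integral_neg, ← h2] at hpos
  linarith

lemma eq_of_eq {n : ℕ} {p q : ℝ} {u v : EE n → ℝ} (h : Sys p q u v) (c : EE n) {R : ℝ} (hR : 0 < R)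
    (he : ∀ x ∈ PB c R, kel p c R v x = v x) : ∀ x ∈ PB c R, kel p c R u x = u x := by
  intro x hx
  obtain ⟨h1, h2⟩ := diff_id h c hR (PB_ne hx)
  rw [setIntegral_eq_zero_of_forall_eq_zero] at h2
  · linarith
  · intro y hy; rw [he y hy]; simp

lemma PB_mem_nhds {n : ℕ} (c : EE n) {R : ℝ} (hR : 0 < R) : PB c R ∈ 𝓝[≠] c := by
  have := inter_mem_nhdsWithin ({c}ᶜ) (Metric.ball_mem_nhds c hR)
  filter_upwards [this] with x hx
  exact ⟨dist_pos.2 hx.1, hx.2⟩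

/-- Moving spheres conclusion. -/
lemma spheres {n : ℕ} {p q : ℝ} {u v : EE n → ℝ} (h : Sys p q u v) (c : EE n) :
    ∃ R, 0 < R ∧ ∀ x ∈ PB c R, kel p c R u x = u x ∧ kel p c R v x = v x := by
  have hp := h.hp
  have : Nonempty (Fin n) := ⟨⟨0, h.hn⟩⟩
  set S : Set ℝ := {r | 0 < r ∧ ∀ x ∈ PB c r, kel p c r u x ≤ u x ∧ kel p c r v x ≤ v x} with hS
  have hSne : S.Nonempty := by
    obtain ⟨r, h1, h2⟩ := advance h c le_rfl (fun x hx => absurd hx.2 (not_lt.2 hx.1.le))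
    exact ⟨r, h1, h2⟩
  have hSbd : BddAbove S := by
    refine ⟨(u c / mass q v) ^ (1 / p), ?_⟩
    rintro r ⟨hr, h1⟩
    have hm := mass_pos h
    have h2 : mass q v * r ^ p ≤ u c := by
      refine le_of_tendsto_of_tendsto (kel_lim h c hr)
        (h.cu.continuousAt.tendsto.mono_left nhdsWithin_le_nhds) ?_
      filter_upwards [PB_mem_nhds c hr] with x hx
      exact (h1 x hx).1
    have h3 : r ^ p ≤ u c / mass q v := by rw [le_div_iff₀ hm]; linarith
    calc r = (r ^ p) ^ (1 / p) := by
          rw [← Real.rpow_mul hr.le, mul_one_div_cancel hp.ne', Real.rpow_one]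
      _ ≤ _ := by gcongr
  set R := sSup S with hRdef
  obtain ⟨r0, hr0⟩ := hSne
  have hR : 0 < R := hr0.1.trans_le (le_csSup hSbd hr0)
  obtain ⟨s, _, hs2, hs3⟩ := exists_seq_tendsto_sSup ⟨r0, hr0⟩ hSbd
  have hgood : ∀ x ∈ PB c R, kel p c R u x ≤ u x ∧ kel p c R v x ≤ v x := by
    intro x hx
    have hev := hs2.eventually (lt_mem_nhds hx.2)
    constructor
    · refine le_of_tendsto ((kel_R_cont (p := p) h.cu (PB_ne hx) hR).tendsto.comp hs2) ?_
      filter_upwards [hev] with k hk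
      exact ((hs3 k).2 x ⟨hx.1, hk⟩).1
    · refine le_of_tendsto ((kel_R_cont (p := p) h.cv (PB_ne hx) hR).tendsto.comp hs2) ?_
      filter_upwards [hev] with k hk
      exact ((hs3 k).2 x ⟨hx.1, hk⟩).2
  refine ⟨R, hR, ?_⟩
  by_cases hE : ∀ x ∈ PB c R, kel p c R u x = u x
  · intro x hx
    exact ⟨hE x hx, eq_of_eq h.symm c hR hE x hx⟩
  · exfalso
    push Not at hE
    obtain ⟨x0, hx0, hne⟩ := hE
    have hlt := lt_of_le_of_ne (hgood x0 hx0).1 hne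
    have sv := strict h.symm c hR (fun x hx => (hgood x hx).1) hx0 hlt
    have su := strict h c hR (fun x hx => (hgood x hx).2) hx0 (sv x0 hx0)
    obtain ⟨r, hr1, hr2⟩ := advance h c hR.le (fun x hx => ⟨su x hx, sv x hx⟩)
    exact absurd (le_csSup hSbd ⟨hR.trans hr1, hr2⟩) (not_le.2 hr1)

lemma center_val {n : ℕ} {p q : ℝ} {u v : EE n → ℝ} (h : Sys p q u v) (c : EE n) {R : ℝ}
    (hR : 0 < R) (he : ∀ x ∈ PB c R, kel p c R u x = u x) : u c = mass q v * R ^ p := by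
  have : Nonempty (Fin n) := ⟨⟨0, h.hn⟩⟩
  refine tendsto_nhds_unique (f := u) (l := 𝓝[≠] c)
    (h.cu.continuousAt.tendsto.mono_left nhdsWithin_le_nhds) ((kel_lim h c hR).congr' ?_)
  filter_upwards [PB_mem_nhds c hR] with x hx
  exact he x hx

lemma ray_lim {n : ℕ} {f : EE n → ℝ} (hf : Differentiable ℝ f) (c : EE n) {R : ℝ} (hR : 0 < R)
    (hRc : R ^ 2 = f c)
    (he : ∀ x ∈ PB c R, f x = (dist x c / R) ^ 2 * f (inversion c R x)) {w : EE n} (hw : w ≠ 0) :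
    Tendsto (fun t : ℝ => (f (t • w) - t ^ 2 * ‖w‖ ^ 2) / t) atTop
      (𝓝 (fderiv ℝ f c w - 2 * inner ℝ w c)) := by
  have hw0 : 0 < ‖w‖ := norm_pos_iff.2 hw
  have hinv : Tendsto (fun t : ℝ => t⁻¹) atTop (𝓝 0) := tendsto_inv_atTop_zero
  have hd : Tendsto (fun t : ℝ => ‖t • w - c‖) atTop atTop := by
    have h1 : Tendsto (fun t : ℝ => t * ‖w‖ - ‖c‖) atTop atTop :=
      tendsto_atTop_add_const_right _ _ (tendsto_id.atTop_mul_const hw0)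
    refine tendsto_atTop_mono' _ ?_ h1
    filter_upwards [eventually_ge_atTop 0] with t ht
    have := norm_sub_norm_le (t • w) c
    rwa [norm_smul, Real.norm_of_nonneg ht] at this
  have key := (hf c).hasFDerivAt.hasFDerivWithinAt (s := univ) |>.lim (l := (atTop : Filter ℝ))
    (c := fun t : ℝ => ‖t • w - c‖ ^ 2 / (t * R ^ 2))
    (d := fun t : ℝ => (R / ‖t • w - c‖) ^ 2 • (t • w - c)) (v := w) ?_ (by simp) ?_
  · have h2 : Tendsto (fun t : ℝ => ‖c‖ ^ 2 * t⁻¹ - 2 * inner ℝ w c) atTop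
        (𝓝 (‖c‖ ^ 2 * 0 - 2 * inner ℝ w c)) := (hinv.const_mul _).sub_const _
    have h3 := key.add h2
    have e : fderiv ℝ f c w + (‖c‖ ^ 2 * 0 - 2 * inner ℝ w c)
      = fderiv ℝ f c w - 2 * inner ℝ w c := by ring
    rw [e] at h3
    refine h3.congr' ?_
    filter_upwards [hd.eventually_gt_atTop R, eventually_gt_atTop 0] with t ht ht0
    have hy0 : 0 < ‖t • w - c‖ := hR.trans ht
    have hmem : inversion c R (t • w) ∈ PB c R := by
      constructor
      · rw [dist_inversion_center, dist_eq_norm]; positivity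
      · rw [dist_inversion_center, dist_eq_norm, div_lt_iff₀ hy0]; nlinarith
    have h4 := he _ hmem
    rw [inversion_inversion c hR.ne', dist_inversion_center, dist_eq_norm] at h4
    have h5 : inversion c R (t • w) = c + (R / ‖t • w - c‖) ^ 2 • (t • w - c) := by
      rw [inversion, vsub_eq_sub, vadd_eq_add, dist_eq_norm, add_comm]
    have h6 : ‖t • w - c‖ ^ 2 = t ^ 2 * ‖w‖ ^ 2 - 2 * (t * inner ℝ w c) + ‖c‖ ^ 2 := by
      rw [norm_sub_sq_real, norm_smul, inner_smul_left, Real.norm_of_nonneg ht0.le]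
      simp only [conj_trivial]; ring
    rw [← h5, h4, smul_eq_mul, ← hRc]
    have h7 : ‖t • w - c‖ ^ 2 / (t * R ^ 2) * ((R ^ 2 / ‖t • w - c‖ / R) ^ 2 * f (t • w) - R ^ 2)
        = (f (t • w) - ‖t • w - c‖ ^ 2) / t := by
      field_simp
    rw [h7, h6]
    field_simp
    ring
  · rw [tendsto_zero_iff_norm_tendsto_zero]
    refine (hd.const_div_atTop (R ^ 2)).congr' ?_
    filter_upwards [hd.eventually_gt_atTop 0] with t ht
    rw [norm_smul, Real.norm_of_nonneg (by positivity)]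
    field_simp
  · have h1 : Tendsto (fun t : ℝ => w - t⁻¹ • c) atTop (𝓝 (w - (0 : ℝ) • c)) :=
      tendsto_const_nhds.sub (hinv.smul_const c)
    rw [zero_smul, sub_zero] at h1
    refine h1.congr' ?_
    filter_upwards [hd.eventually_gt_atTop 0, eventually_gt_atTop 0] with t ht ht0
    rw [smul_smul]
    have : ‖t • w - c‖ ^ 2 / (t * R ^ 2) * (R / ‖t • w - c‖) ^ 2 = t⁻¹ := by field_simp
    rw [this, smul_sub, smul_smul, inv_mul_cancel₀ ht0.ne', one_smul]

lemma quad {n : ℕ} {f : EE n → ℝ} (hf : Differentiable ℝ f) (hpos : ∀ x, 0 < f x)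
    (he : ∀ c, ∃ R, 0 < R ∧ R ^ 2 = f c ∧
      ∀ x ∈ PB c R, f x = (dist x c / R) ^ 2 * f (inversion c R x)) :
    ∃ (x0 : EE n) (d : ℝ), 0 < d ∧ ∀ x, f x = ‖x - x0‖ ^ 2 + d ^ 2 := by
  have hder : ∀ c w, fderiv ℝ f c w = fderiv ℝ f 0 w + 2 * inner ℝ c w := by
    intro c w
    by_cases hw : w = 0
    · simp [hw]
    obtain ⟨R, hR, h1, h2⟩ := he c
    obtain ⟨R', hR', h1', h2'⟩ := he 0
    have := tendsto_nhds_unique (ray_lim hf c hR h1 h2 hw) (ray_lim hf 0 hR' h1' h2' hw)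
    rw [inner_zero_right, real_inner_comm] at this
    linarith
  set L := fderiv ℝ f 0 with hL
  have hg : ∀ x, HasFDerivAt (fun x => f x - L x - ‖x‖ ^ 2) (0 : EE n →L[ℝ] ℝ) x := by
    intro x
    have := ((hf x).hasFDerivAt.sub L.hasFDerivAt).sub (hasStrictFDerivAt_norm_sq x).hasFDerivAt
    have e0 : fderiv ℝ f x - L - 2 • (innerSL ℝ) x = 0 := by
      ext w
      simp [hder x w]
    rw [e0] at this
    exact this
  have hconst : ∀ x, f x - L x - ‖x‖ ^ 2 = f 0 - L 0 - ‖(0 : EE n)‖ ^ 2 := fun x =>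
    is_const_of_fderiv_eq_zero (𝕜 := ℝ) (fun x => (hg x).differentiableAt)
      (fun x => (hg x).fderiv) x 0
  set b := (InnerProductSpace.toDual ℝ (EE n)).symm L with hb
  have hLb : ∀ x, L x = inner ℝ b x := fun x => by
    rw [hb, InnerProductSpace.toDual_symm_apply]
  set x0 : EE n := -(1 / 2 : ℝ) • b with hx0
  have hfx : ∀ x, f x = ‖x - x0‖ ^ 2 + (f 0 - ‖x0‖ ^ 2) := by
    intro x
    have h1 := hconst x
    have h2 : inner ℝ x x0 = -(1 / 2) * inner ℝ b x := by
      rw [hx0, inner_smul_right, real_inner_comm]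
    rw [map_zero, norm_zero, hLb] at h1
    rw [norm_sub_sq_real, h2]
    linarith
  have hD : 0 < f 0 - ‖x0‖ ^ 2 := by
    have := hpos x0
    rw [hfx x0] at this
    simpa using this
  refine ⟨x0, Real.sqrt (f 0 - ‖x0‖ ^ 2), Real.sqrt_pos.2 hD, fun x => ?_⟩
  rw [Real.sq_sqrt hD.le]; exact hfx x

lemma pot_real {n : ℕ} {p q : ℝ} {u v : EE n → ℝ} (hp : 0 < p) (cv : Continuous v)
    (pu : ∀ x, 0 < u x) (pv : ∀ x, 0 < v x) (y : EE n)
    (h : ENNReal.ofReal (u y) = ∫⁻ x, ENNReal.ofReal (dist x y ^ p * v x ^ (-q))) :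
    Integrable (fun x => dist x y ^ p * v x ^ (-q)) ∧ u y = ∫ x, dist x y ^ p * v x ^ (-q) := by
  have hm : AEStronglyMeasurable (fun x => dist x y ^ p * v x ^ (-q)) volume := by
    apply Continuous.aestronglyMeasurable
    apply Continuous.mul
    · exact Continuous.rpow_const (by fun_prop) (fun x => Or.inr hp.le)
    · exact Continuous.rpow_const cv (fun x => Or.inl (pv x).ne')
  have h0 : 0 ≤ᵐ[volume] fun x => dist x y ^ p * v x ^ (-q) := by
    filter_upwards with x
    have := pv x
    show 0 ≤ dist x y ^ p * v x ^ (-q)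
    positivity
  constructor
  · refine ⟨hm, ?_⟩
    rw [hasFiniteIntegral_iff_ofReal h0, ← h]
    exact ENNReal.ofReal_lt_top
  · rw [integral_eq_lintegral_of_nonneg_ae h0 hm, ← h, ENNReal.toReal_ofReal (pu y).le]

/-- **Classification of positive solutions of the conformally invariant integral system**
(Theorem 3.3): for `1 ≤ n < α` and `θ = κ = (n+α)/(n-α)`, every pair `(u, v)` of positive
finite smooth solutions of `u(y) = ∫ |x-y|^(α-n) v(x)^κ dx`,
`v(x) = ∫ |x-y|^(α-n) u(y)^θ dy` is of the form
`u(ξ) = c₁ (1/(|ξ-ξ₀|² + d²))^((n-α)/2)`, `v(ξ) = c₂ (1/(|ξ-ξ₀|² + d²))^((n-α)/2)`. -/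
theorem integral_system_classification (n : ℕ) (hn : 1 ≤ n) (α : ℝ)
    (hα : (n : ℝ) < α)
    (u v : EuclideanSpace ℝ (Fin n) → ℝ)
    (husmooth : ContDiff ℝ (⊤ : ℕ∞) u) (hvsmooth : ContDiff ℝ (⊤ : ℕ∞) v)
    (hupos : ∀ y, 0 < u y) (hvpos : ∀ x, 0 < v x)
    (hueq : ∀ y, ENNReal.ofReal (u y) =
      ∫⁻ x, ENNReal.ofReal (dist x y ^ (α - n) * v x ^ (((n : ℝ) + α) / ((n : ℝ) - α))))
    (hveq : ∀ x, ENNReal.ofReal (v x) =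
      ∫⁻ y, ENNReal.ofReal (dist x y ^ (α - n) * u y ^ (((n : ℝ) + α) / ((n : ℝ) - α)))) :
    ∃ (c₁ c₂ d : ℝ) (ξ₀ : EuclideanSpace ℝ (Fin n)), 0 < c₁ ∧ 0 < c₂ ∧ 0 < d ∧
      ∀ ξ : EuclideanSpace ℝ (Fin n),
        u ξ = c₁ * (1 / (‖ξ - ξ₀‖ ^ 2 + d ^ 2)) ^ (((n : ℝ) - α) / 2) ∧
        v ξ = c₂ * (1 / (‖ξ - ξ₀‖ ^ 2 + d ^ 2)) ^ (((n : ℝ) - α) / 2) := by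
  set p : ℝ := α - n with hpdef
  set q : ℝ := ((n : ℝ) + α) / (α - n) with hqdef
  have hp : 0 < p := by rw [hpdef]; linarith
  have hn0 : (1 : ℝ) ≤ n := by exact_mod_cast hn
  have hq : 0 < q := by rw [hqdef]; apply div_pos <;> linarith
  have hpq : p * q = p + 2 * n := by
    rw [hqdef, ← hpdef, mul_div_cancel₀ _ hp.ne', hpdef]; ring
  have hexp : ((n : ℝ) + α) / ((n : ℝ) - α) = -q := by
    rw [hqdef, ← div_neg]; congr 1; ring
  rw [hexp] at hueq hveq
  have hveq' : ∀ x, ENNReal.ofReal (v x) =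
      ∫⁻ y, ENNReal.ofReal (dist y x ^ p * u y ^ (-q)) := by
    intro x; rw [hveq x]; simp_rw [dist_comm x]
  have cu := husmooth.continuous
  have cv := hvsmooth.continuous
  have h : Sys p q u v :=
    ⟨hn, hp, hq, hpq, cu, cv, hupos, hvpos,
      fun y => (pot_real hp cv hupos hvpos y (hueq y)).1,
      fun y => (pot_real hp cv hupos hvpos y (hueq y)).2,
      fun y => (pot_real hp cu hvpos hupos y (hveq' y)).1,
      fun y => (pot_real hp cu hvpos hupos y (hveq' y)).2⟩
  have hA := mass_pos h
  have hB := mass_pos h.symm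
  set A := mass q v with hAdef
  set B := mass q u with hBdef
  set f : EE n → ℝ := fun x => (u x / A) ^ (2 / p) with hf
  have hfdiff : Differentiable ℝ f := by
    have hu1 : Differentiable ℝ u := husmooth.differentiable (by simp)
    have hu2 : Differentiable ℝ (fun x => u x / A) := by
      simp_rw [div_eq_mul_inv]; exact hu1.mul_const _
    exact hu2.rpow_const (fun x => Or.inl (div_pos (hupos x) hA).ne')
  have hfpos : ∀ x, 0 < f x := fun x => Real.rpow_pos_of_pos (div_pos (hupos x) hA) _
  have hpow : ∀ s : ℝ, 0 ≤ s → (s ^ p) ^ (2 / p) = s ^ 2 := by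
    intro s hs
    rw [← Real.rpow_mul hs, mul_div_cancel₀ _ hp.ne', Real.rpow_two]
  obtain ⟨x0, d, hd, hfx⟩ := quad hfdiff hfpos (by
    intro c
    obtain ⟨R, hR, hR2⟩ := spheres h c
    have hc := center_val h c hR (fun x hx => (hR2 x hx).1)
    refine ⟨R, hR, ?_, ?_⟩
    · simp only [hf]
      rw [hc, mul_div_cancel_left₀ _ hA.ne', hpow R hR.le]
    · intro x hx
      have h1 := (hR2 x hx).1
      simp only [hf]
      rw [← h1, kel, mul_div_assoc, Real.mul_rpow (by positivity) (div_pos (hupos _) hA).le,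
        hpow _ (by positivity)])
  have huf : ∀ x, u x = A * (f x) ^ (p / 2) := by
    intro x
    simp only [hf]
    rw [← Real.rpow_mul (div_pos (hupos x) hA).le]
    have : 2 / p * (p / 2) = 1 := by field_simp
    rw [this, Real.rpow_one, mul_div_cancel₀ _ hA.ne']
  have hvu : ∀ x, v x = B / A * u x := by
    intro c
    obtain ⟨R, hR, hR2⟩ := spheres h c
    rw [center_val h c hR (fun x hx => (hR2 x hx).1),
      center_val h.symm c hR (fun x hx => (hR2 x hx).2), ← hAdef, ← hBdef]
    field_simp
  have hfin : ∀ x, (1 / (‖x - x0‖ ^ 2 + d ^ 2)) ^ (((n : ℝ) - α) / 2) = (f x) ^ (p / 2) := by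
    intro x
    rw [← hfx x, one_div, Real.inv_rpow (hfpos x).le, ← Real.rpow_neg (hfpos x).le]
    congr 1
    rw [hpdef]; ring
  refine ⟨A, B, d, x0, hA, hB, hd, fun x => ?_⟩
  rw [hfin x]
  refine ⟨huf x, ?_⟩
  rw [hvu x, huf x]
  field_simp
end

section
/- Let 1 ≤ n < α and θ = κ = (n+α)/(n−α). Suppose (u, v) is a pair of positive, everywhere finite, smooth functions on ℝⁿ satisfying u(y) = ∫_{ℝⁿ}|x−y|^{α−n} v(x)^κ dx and v(x) = ∫_{ℝⁿ}|x−y|^{α−n} u(y)^θ dy for all x, y ∈ ℝⁿ. For x ∈ ℝⁿ define λ̄(x) = sup{μ > 0 : for every λ ∈ (0, μ), u_{x,λ}(ξ) ≥ u(ξ) and v_{x,λ}(η) ≥ v(η) for all ξ, η ∈ Σ_{x,λ}}. If λ̄(x₀) < ∞ for some x₀ ∈ ℝⁿ, then u_{x₀, λ̄(x₀)}(ξ) = u(ξ) and v_{x₀, λ̄(x₀)}(η) = v(η) for all ξ, η ∈ ℝⁿ \ {x₀}. -/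
open MeasureTheory ENNReal

/-- The Kelvin-type transform
`ω_{x,λ}(ξ) = (λ/|ξ-x|)^(n-α) ω(x + λ²(ξ-x)/|ξ-x|²)`. -/
noncomputable def kelvin (n : ℕ) (α : ℝ) (ω : EuclideanSpace ℝ (Fin n) → ℝ)
    (x : EuclideanSpace ℝ (Fin n)) (lam : ℝ) (ξ : EuclideanSpace ℝ (Fin n)) : ℝ :=
  (lam / dist ξ x) ^ ((n : ℝ) - α) * ω (x + (lam ^ 2 / dist ξ x ^ 2) • (ξ - x))


/-- Inversion in the sphere of radius `lam` centred at the origin. -/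
noncomputable def iv {n : ℕ} (lam : ℝ) (z : EuclideanSpace ℝ (Fin n)) :
    EuclideanSpace ℝ (Fin n) := (lam ^ 2 / ‖z‖ ^ 2) • z

lemma iv_eq_inversion {n : ℕ} (lam : ℝ) :
    (iv lam : EuclideanSpace ℝ (Fin n) → _) = EuclideanGeometry.inversion 0 lam := by
  ext1 z
  simp [iv, EuclideanGeometry.inversion, div_pow]

lemma norm_iv {n : ℕ} (lam : ℝ) (z : EuclideanSpace ℝ (Fin n)) :
    ‖iv lam z‖ = lam ^ 2 / ‖z‖ := by
  have := EuclideanGeometry.dist_inversion_center (0 : EuclideanSpace ℝ (Fin n)) z lam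
  simpa [iv_eq_inversion] using this

lemma iv_iv {n : ℕ} {lam : ℝ} (hl : 0 < lam) (z : EuclideanSpace ℝ (Fin n)) :
    iv lam (iv lam z) = z := by
  rw [iv_eq_inversion]
  exact EuclideanGeometry.inversion_inversion _ hl.ne' z

lemma geo_two {n : ℕ} {lam : ℝ} (z ξ : EuclideanSpace ℝ (Fin n))
    (hz : z ≠ 0) (hξ : ξ ≠ 0) :
    (‖ξ‖ / lam) * dist z (iv lam ξ) = (‖z‖ / lam) * dist (iv lam z) ξ := by
  have := EuclideanGeometry.dist_inversion_mul_dist_center_eq (R := lam) hz hξ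
  rw [iv_eq_inversion]
  simp only [dist_zero_right] at this
  rw [div_mul_eq_mul_div, div_mul_eq_mul_div, mul_comm, ← this, mul_comm]

lemma geo_three {n : ℕ} {lam : ℝ} (hl : 0 < lam) (z ξ : EuclideanSpace ℝ (Fin n))
    (hz : z ≠ 0) (hξ : ξ ≠ 0) :
    (‖ξ‖ / lam) * dist (iv lam z) (iv lam ξ) = (lam / ‖z‖) * dist z ξ := by
  have := EuclideanGeometry.dist_inversion_inversion hz hξ lam
  rw [iv_eq_inversion, this]
  have h1 : ‖z‖ ≠ 0 := by simpa using hz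
  have h2 : ‖ξ‖ ≠ 0 := by simpa using hξ
  simp only [dist_zero_right]
  field_simp

lemma geo_four {n : ℕ} {lam : ℝ} (hl : 0 < lam) (z ξ : EuclideanSpace ℝ (Fin n))
    (hz : z ≠ 0) :
    ((‖z‖ / lam) * dist (iv lam z) ξ) ^ 2 - dist z ξ ^ 2
      = (‖ξ‖ ^ 2 - lam ^ 2) * (‖z‖ ^ 2 - lam ^ 2) / lam ^ 2 := by
  have h1 : ‖z‖ ≠ 0 := by simpa using hz
  rw [mul_pow, dist_eq_norm, dist_eq_norm, norm_sub_sq_real, norm_sub_sq_real, norm_iv]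
  simp only [iv, real_inner_smul_left]
  field_simp
  ring

lemma cov {n : ℕ} (hn : 1 ≤ n) {lam : ℝ} (hl : 0 < lam) (g : EuclideanSpace ℝ (Fin n) → ℝ≥0∞) :
    ∫⁻ z, g z = (∫⁻ z in {z | lam < ‖z‖}, g z) +
      ∫⁻ z in {z | lam < ‖z‖}, ENNReal.ofReal ((lam / ‖z‖) ^ (2 * n)) * g (iv lam z) := by
  have : Nonempty (Fin n) := ⟨⟨0, hn⟩⟩
  have hS : MeasurableSet {z : EuclideanSpace ℝ (Fin n) | lam < ‖z‖} :=
    (isOpen_lt continuous_const continuous_norm).measurableSet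
  rw [← lintegral_add_compl g hS]
  congr 1
  have himg : ({z : EuclideanSpace ℝ (Fin n) | lam < ‖z‖}ᶜ : Set _)
      =ᵐ[volume] (iv lam) '' {z : EuclideanSpace ℝ (Fin n) | lam < ‖z‖} := by
    have h0 : ∀ᵐ z : EuclideanSpace ℝ (Fin n), z ≠ 0 := by
      simp [ae_iff]
    have h1 : ∀ᵐ z : EuclideanSpace ℝ (Fin n), z ∉ Metric.sphere 0 lam :=
      measure_eq_zero_iff_ae_notMem.1 (Measure.addHaar_sphere_of_ne_zero volume _ hl.ne')
    filter_upwards [h0, h1] with z hz0 hz1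
    apply propext
    change ¬ (lam < ‖z‖) ↔ z ∈ iv lam '' {z : EuclideanSpace ℝ (Fin n) | lam < ‖z‖}
    have hzp : 0 < ‖z‖ := by simpa using hz0
    have hz1' : ‖z‖ ≠ lam := by simpa using hz1
    constructor
    · intro h
      refine ⟨iv lam z, ?_, iv_iv hl z⟩
      change lam < ‖iv lam z‖
      have : ‖z‖ < lam := lt_of_le_of_ne (not_lt.1 h) hz1'
      rw [norm_iv, lt_div_iff₀ hzp]; nlinarith
    · rintro ⟨w, hw, rfl⟩
      have hw' : lam < ‖w‖ := hw
      rw [norm_iv, lt_div_iff₀ (by linarith)]; nlinarith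
  rw [setLIntegral_congr himg]
  rw [lintegral_image_eq_lintegral_abs_det_fderiv_mul volume hS
    (f' := fun z => ((lam / dist z 0) ^ 2 • ((ℝ ∙ (z - 0))ᗮ.reflection :
      EuclideanSpace ℝ (Fin n) →L[ℝ] EuclideanSpace ℝ (Fin n))))]
  · apply setLIntegral_congr_fun hS
    intro z hz
    have hz' : lam < ‖z‖ := hz
    simp only
    congr 2
    rw [ContinuousLinearMap.det, ContinuousLinearMap.toLinearMap_smul, LinearMap.det_smul, abs_mul]
    have : |LinearMap.det (((ℝ ∙ (z - 0))ᗮ.reflection :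
      EuclideanSpace ℝ (Fin n) →L[ℝ] EuclideanSpace ℝ (Fin n)) : EuclideanSpace ℝ (Fin n) →ₗ[ℝ] EuclideanSpace ℝ (Fin n))| = 1 := by
      have h := Submodule.det_reflection ((ℝ ∙ (z - 0))ᗮ)
      refine Eq.trans (congrArg abs h) ?_
      simp
    rw [this, mul_one]
    simp only [dist_zero_right, finrank_euclideanSpace, Fintype.card_fin]
    rw [← pow_mul, abs_of_nonneg]
    positivity
  · intro z hz
    have hz' : lam < ‖z‖ := hz
    have : z ≠ 0 := by rintro rfl; simp at hz'; linarith
    rw [iv_eq_inversion]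
    exact (EuclideanGeometry.hasFDerivAt_inversion this).hasFDerivWithinAt
  · rw [iv_eq_inversion]
    exact (EuclideanGeometry.inversion_injective _ hl.ne').injOn

lemma rpow_gap {s x : ℝ} (hs : 0 < s) (hx0 : 0 ≤ x) (hx1 : x ≤ 1) :
    min 1 s * (1 - x) ≤ 1 - x ^ s := by
  rcases le_total 1 s with h | h
  · rw [min_eq_left h]
    have : x ^ s ≤ x := by
      simpa using Real.rpow_le_rpow_of_exponent_ge' hx0 hx1 zero_le_one h
    linarith
  · rw [min_eq_right h]
    have := rpow_one_add_le_one_add_mul_self (s := x - 1) (by linarith) hs.le h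
    rw [show 1 + (x - 1) = x by ring] at this
    linarith

lemma kernel_gap {p A B : ℝ} (hp : 0 < p) (hA : 0 < A) (hB : 0 ≤ B) (hBA : B ≤ A) :
    min 1 (p / 2) * (A ^ p * ((A ^ 2 - B ^ 2) / A ^ 2)) ≤ A ^ p - B ^ p := by
  have h1 : (B / A) ^ 2 ≤ 1 := by
    rw [div_pow, div_le_one (by positivity)]; gcongr
  have h := rpow_gap (s := p / 2) (x := (B / A) ^ 2) (by linarith) (by positivity) h1
  have h2 : ((B / A) ^ 2) ^ (p / 2) = B ^ p / A ^ p := by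
    rw [← Real.rpow_natCast, ← Real.rpow_mul (by positivity), Real.div_rpow hB hA.le]
    congr 2 <;> push_cast <;> ring
  rw [h2] at h
  have hAp : 0 < A ^ p := Real.rpow_pos_of_pos hA p
  have h3 := mul_le_mul_of_nonneg_left h hAp.le
  have e1 : A ^ p * (1 - B ^ p / A ^ p) = A ^ p - B ^ p := by field_simp
  have e2 : (A ^ 2 - B ^ 2) / A ^ 2 = 1 - (B / A) ^ 2 := by field_simp
  rw [e1] at h3
  rw [e2]
  linarith

lemma kernel_lower {n : ℕ} {lam p a b : ℝ} (hl : 0 < lam) (hp : 0 < p) (ha : lam < a)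
    (z ξ : EuclideanSpace ℝ (Fin n)) (hza : a ≤ ‖z‖) (hzb : ‖z‖ ≤ b) (hξ : lam < ‖ξ‖) :
    (min 1 (p / 2) * ((a / lam - 1) ^ p * ((a ^ 2 - lam ^ 2) / lam ^ 2 / (b / lam + 1) ^ 2))) *
      (‖ξ‖ ^ p * (1 - lam ^ 2 / ‖ξ‖ ^ 2)) ≤
    ((‖z‖ / lam) * dist (iv lam z) ξ) ^ p - dist z ξ ^ p := by
  have hξ0 : 0 < ‖ξ‖ := hl.trans hξ
  have hz0 : 0 < ‖z‖ := by linarith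
  have hzne : z ≠ 0 := by simpa using hz0
  have hg := geo_four hl z ξ hzne
  set A := (‖z‖ / lam) * dist (iv lam z) ξ with hA
  set B := dist z ξ with hB
  have hal : 0 < a / lam - 1 := by rw [sub_pos, lt_div_iff₀ hl]; linarith
  have hd1 : ‖ξ‖ - lam ^ 2 / ‖z‖ ≤ dist (iv lam z) ξ := by
    have := norm_sub_norm_le ξ (iv lam z)
    rw [norm_iv] at this
    rwa [dist_comm, dist_eq_norm]
  have hd2 : dist (iv lam z) ξ ≤ ‖ξ‖ + lam ^ 2 / ‖z‖ := by
    have := norm_sub_le ξ (iv lam z)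
    rw [norm_iv] at this
    rwa [dist_comm, dist_eq_norm]
  have hA1 : (a / lam - 1) * ‖ξ‖ ≤ A := by
    have h1 : (‖z‖ / lam) * (‖ξ‖ - lam ^ 2 / ‖z‖) ≤ A := by
      rw [hA]; gcongr
    have h2 : (‖z‖ / lam) * (‖ξ‖ - lam ^ 2 / ‖z‖) = ‖z‖ / lam * ‖ξ‖ - lam := by field_simp
    have h3 : a / lam * ‖ξ‖ ≤ ‖z‖ / lam * ‖ξ‖ := by gcongr
    linarith
  have hA2 : A ≤ (b / lam + 1) * ‖ξ‖ := by
    have h1 : A ≤ (‖z‖ / lam) * (‖ξ‖ + lam ^ 2 / ‖z‖) := by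
      rw [hA]; gcongr
    have h2 : (‖z‖ / lam) * (‖ξ‖ + lam ^ 2 / ‖z‖) = ‖z‖ / lam * ‖ξ‖ + lam := by field_simp
    have h3 : ‖z‖ / lam * ‖ξ‖ ≤ b / lam * ‖ξ‖ := by gcongr
    linarith
  have hApos : 0 < A := lt_of_lt_of_le (by positivity) hA1
  have hx : 0 < ‖ξ‖ ^ 2 - lam ^ 2 := by nlinarith
  have hy : 0 < a ^ 2 - lam ^ 2 := by nlinarith
  have hyz : a ^ 2 - lam ^ 2 ≤ ‖z‖ ^ 2 - lam ^ 2 := by nlinarith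
  have hBA : B ≤ A := by
    have : 0 ≤ A ^ 2 - B ^ 2 := by rw [hg]; apply div_nonneg (mul_nonneg hx.le (by linarith)); positivity
    exact abs_le_of_sq_le_sq' (by linarith) hApos.le |>.2
  refine le_trans ?_ (kernel_gap hp hApos dist_nonneg hBA)
  rw [mul_assoc]
  have hm : 0 ≤ min 1 (p / 2) := by positivity
  refine mul_le_mul_of_nonneg_left ?_ hm
  have e1 : (a / lam - 1) ^ p * ((a ^ 2 - lam ^ 2) / lam ^ 2 / (b / lam + 1) ^ 2) *
      (‖ξ‖ ^ p * (1 - lam ^ 2 / ‖ξ‖ ^ 2)) = ((a / lam - 1) * ‖ξ‖) ^ p *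
      (((‖ξ‖ ^ 2 - lam ^ 2) * (a ^ 2 - lam ^ 2) / lam ^ 2) / ((b / lam + 1) * ‖ξ‖) ^ 2) := by
    rw [Real.mul_rpow hal.le hξ0.le]
    have : b / lam + 1 ≠ 0 := by
      have : 0 < b / lam := div_pos (by linarith) hl
      linarith
    field_simp
  rw [e1, hg]
  gcongr
  exact div_nonneg (mul_nonneg hx.le (hy.le.trans hyz)) (by positivity)

lemma rep {n : ℕ} (hn : 1 ≤ n) {lam p r : ℝ} (hl : 0 < lam) (hp : 0 < p)
    (U V : EuclideanSpace ℝ (Fin n) → ℝ) (hVc : Continuous V) (hVpos : ∀ x, 0 < V x)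
    (heq : ∀ y, ENNReal.ofReal (U y) = ∫⁻ x, ENNReal.ofReal (dist x y ^ p * V x ^ r))
    (y : EuclideanSpace ℝ (Fin n)) :
    ENNReal.ofReal (U y) = ∫⁻ z in {z | lam < ‖z‖}, ENNReal.ofReal (dist z y ^ p * V z ^ r +
      (lam / ‖z‖) ^ (2 * n) * (dist (iv lam z) y ^ p * V (iv lam z) ^ r)) := by
  have hS : MeasurableSet {z : EuclideanSpace ℝ (Fin n) | lam < ‖z‖} :=
    (isOpen_lt continuous_const continuous_norm).measurableSet
  have hc : Continuous fun z => dist z y ^ p * V z ^ r := by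
    refine ((continuous_id.dist continuous_const).rpow_const fun _ => Or.inr hp.le).mul
      (hVc.rpow_const fun x => Or.inl (hVpos x).ne')
  rw [heq, cov hn hl, ← lintegral_add_left hc.measurable.ennreal_ofReal]
  apply setLIntegral_congr_fun hS
  intro z _
  have h1 := (hVpos z)
  have h2 := (hVpos (iv lam z))
  simp only
  rw [← ENNReal.ofReal_mul (by positivity), ← ENNReal.ofReal_add (by positivity) (by positivity)]

lemma weight_eq {n : ℕ} {lam p r : ℝ} (hl : 0 < lam) (hr : r * p = -(2 * n + p))
    (V : EuclideanSpace ℝ (Fin n) → ℝ) (hVpos : ∀ x, 0 < V x)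
    (z : EuclideanSpace ℝ (Fin n)) (hz : z ≠ 0) :
    ((‖z‖ / lam) ^ p * V (iv lam z)) ^ r =
      (lam / ‖z‖) ^ (2 * n) * (lam / ‖z‖) ^ p * V (iv lam z) ^ r := by
  have hz0 : 0 < ‖z‖ := by simpa using hz
  rw [Real.mul_rpow (by positivity) (hVpos _).le, ← Real.rpow_mul (by positivity), mul_comm p r, hr,
    Real.rpow_neg (by positivity), ← Real.inv_rpow (by positivity), inv_div,
    Real.rpow_add (by positivity)]
  congr 2
  rw [← Real.rpow_natCast]
  push_cast
  rfl

lemma key {n : ℕ} (hn : 1 ≤ n) {lam p r : ℝ} (hl : 0 < lam) (hp : 0 < p)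
    (hr : r * p = -(2 * n + p))
    (U V : EuclideanSpace ℝ (Fin n) → ℝ) (hVc : Continuous V)
    (hUpos : ∀ x, 0 < U x) (hVpos : ∀ x, 0 < V x)
    (heq : ∀ y, ENNReal.ofReal (U y) = ∫⁻ x, ENNReal.ofReal (dist x y ^ p * V x ^ r))
    (hle : ∀ z, lam < ‖z‖ → V z ≤ (‖z‖ / lam) ^ p * V (iv lam z))
    (z₀ : EuclideanSpace ℝ (Fin n)) (hz₀ : lam < ‖z₀‖)
    (hlt : V z₀ < (‖z₀‖ / lam) ^ p * V (iv lam z₀)) :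
    ∃ c > 0, ∀ ξ, lam < ‖ξ‖ → U ξ + c * (‖ξ‖ ^ p * (1 - lam ^ 2 / ‖ξ‖ ^ 2)) ≤
      (‖ξ‖ / lam) ^ p * U (iv lam ξ) := by
  have hrneg : r < 0 := by
    by_contra h
    have : 0 ≤ r * p := mul_nonneg (not_lt.1 h) hp.le
    have hn' : (0:ℝ) ≤ n := by positivity
    linarith
  have hSo : IsOpen {z : EuclideanSpace ℝ (Fin n) | lam < ‖z‖} :=
    (isOpen_lt continuous_const continuous_norm)
  have hS : MeasurableSet {z : EuclideanSpace ℝ (Fin n) | lam < ‖z‖} := hSo.measurableSet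
  set W : EuclideanSpace ℝ (Fin n) → ℝ := fun z => ((‖z‖ / lam) ^ p * V (iv lam z)) ^ r with hW
  have hz₀pos : 0 < ‖z₀‖ := hl.trans hz₀
  have hWle : ∀ z, lam < ‖z‖ → W z ≤ V z ^ r := fun z hz =>
    Real.rpow_le_rpow_of_nonpos (hVpos z) (hle z hz) hrneg.le
  have hWlt : W z₀ < V z₀ ^ r := Real.rpow_lt_rpow_of_neg (hVpos z₀) hlt hrneg
  have hivc : ContinuousAt (iv lam : EuclideanSpace ℝ (Fin n) → _) z₀ := by
    unfold iv
    exact ((continuousAt_const.div (continuous_norm.continuousAt.pow 2) (pow_pos hz₀pos 2).ne')).smul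
      continuousAt_id
  have hWc : ContinuousAt (fun z => V z ^ r - W z) z₀ := by
    refine ContinuousAt.sub ?_ ?_
    · exact hVc.continuousAt.rpow_const (Or.inl (hVpos _).ne')
    · refine ContinuousAt.rpow_const ?_ (Or.inl ?_)
      · refine ContinuousAt.mul ?_ ?_
        · exact (continuous_norm.continuousAt.div_const _).rpow_const (Or.inr hp.le)
        · exact ContinuousAt.comp (g := V) hVc.continuousAt hivc
      · have := hVpos (iv lam z₀)
        positivity
  set m := (V z₀ ^ r - W z₀) / 2 with hm
  have hmpos : 0 < m := by rw [hm]; linarith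
  set a := (lam + ‖z₀‖) / 2 with ha
  set b := ‖z₀‖ + 1 with hb
  have hev : ∀ᶠ z in nhds z₀, m < V z ^ r - W z ∧ a < ‖z‖ ∧ ‖z‖ < b := by
    refine (hWc.eventually_const_lt (by rw [hm]; linarith)).and
      ((continuous_norm.continuousAt.eventually_const_lt (by rw [ha]; linarith)).and
      (continuous_norm.continuousAt.eventually_lt_const (by rw [hb]; linarith)))
  obtain ⟨ρ, hρ, hball⟩ := Metric.eventually_nhds_iff_ball.1 hev
  set k := min 1 (p / 2) * ((a / lam - 1) ^ p *
    ((a ^ 2 - lam ^ 2) / lam ^ 2 / (b / lam + 1) ^ 2)) with hk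
  have hal : lam < a := by rw [ha]; linarith
  have hkpos : 0 < k := by
    have h1 : 0 < a / lam - 1 := by rw [sub_pos, lt_div_iff₀ hl]; linarith
    have h2 : 0 < a ^ 2 - lam ^ 2 := by nlinarith
    positivity
  have hvol : 0 < (volume (Metric.ball z₀ ρ)).toReal :=
    ENNReal.toReal_pos (Metric.measure_ball_pos volume z₀ hρ).ne' measure_ball_lt_top.ne
  refine ⟨k * m * (volume (Metric.ball z₀ ρ)).toReal, by positivity, ?_⟩
  intro ξ hξ
  have hξ0 : 0 < ‖ξ‖ := hl.trans hξ
  have hξne : ξ ≠ 0 := by simpa using hξ0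
  set q := ‖ξ‖ ^ p * (1 - lam ^ 2 / ‖ξ‖ ^ 2) with hq
  have hqpos : 0 < q := by
    have : 0 < 1 - lam ^ 2 / ‖ξ‖ ^ 2 := by
      rw [sub_pos, div_lt_one (by positivity)]; gcongr
    positivity
  have hU2 : 0 < U (iv lam ξ) := hUpos _
  -- the two representations
  have e1 : ENNReal.ofReal (U ξ) = ∫⁻ z in {z | lam < ‖z‖}, ENNReal.ofReal
      (dist z ξ ^ p * V z ^ r + ((‖z‖ / lam) * dist (iv lam z) ξ) ^ p * W z) := by
    rw [rep hn hl hp U V hVc hVpos heq ξ]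
    apply setLIntegral_congr_fun hS
    intro z hz
    have hz0 : 0 < ‖z‖ := hl.trans hz
    have hzne : z ≠ 0 := by simpa using hz0
    simp only [hW]
    rw [weight_eq hl hr V hVpos z hzne, Real.mul_rpow (by positivity) dist_nonneg]
    have : (‖z‖ / lam) ^ p * (lam / ‖z‖) ^ p = 1 := by
      rw [← Real.mul_rpow (by positivity) (by positivity)]
      rw [show ‖z‖ / lam * (lam / ‖z‖) = 1 by field_simp, Real.one_rpow]
    congr 2
    linear_combination (-(dist (iv lam z) ξ ^ p * (lam / ‖z‖) ^ (2 * n) * V (iv lam z) ^ r)) * this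
  have e2 : ENNReal.ofReal ((‖ξ‖ / lam) ^ p * U (iv lam ξ)) =
      ∫⁻ z in {z | lam < ‖z‖}, ENNReal.ofReal
      (((‖z‖ / lam) * dist (iv lam z) ξ) ^ p * V z ^ r + dist z ξ ^ p * W z) := by
    rw [ENNReal.ofReal_mul (by positivity), rep hn hl hp U V hVc hVpos heq (iv lam ξ),
      ← lintegral_const_mul' _ _ ENNReal.ofReal_ne_top]
    apply setLIntegral_congr_fun hS
    intro z hz
    have hz0 : 0 < ‖z‖ := hl.trans hz
    have hzne : z ≠ 0 := by simpa using hz0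
    simp only [hW]
    rw [← ENNReal.ofReal_mul (by positivity), weight_eq hl hr V hVpos z hzne]
    have g2 : (‖ξ‖ / lam) ^ p * dist z (iv lam ξ) ^ p = ((‖z‖ / lam) * dist (iv lam z) ξ) ^ p := by
      rw [← geo_two z ξ hzne hξne, Real.mul_rpow (by positivity) dist_nonneg]
    have g3 : (‖ξ‖ / lam) ^ p * dist (iv lam z) (iv lam ξ) ^ p = (lam / ‖z‖) ^ p * dist z ξ ^ p := by
      rw [← Real.mul_rpow (by positivity) dist_nonneg, geo_three hl z ξ hzne hξne,
        Real.mul_rpow (by positivity) dist_nonneg]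
    congr 1
    rw [← g2]
    linear_combination ((lam / ‖z‖) ^ (2 * n) * V (iv lam z) ^ r) * g3
  have hsub : Metric.ball z₀ ρ ⊆ {z | lam < ‖z‖} := fun z hz => hal.trans (hball z hz).2.1
  have hmain : ENNReal.ofReal (U ξ) + ENNReal.ofReal (k * q * m) * volume (Metric.ball z₀ ρ) ≤
      ENNReal.ofReal ((‖ξ‖ / lam) ^ p * U (iv lam ξ)) := by
    rw [e1, e2]
    have : ENNReal.ofReal (k * q * m) * volume (Metric.ball z₀ ρ) =
        ∫⁻ z in {z | lam < ‖z‖}, (Metric.ball z₀ ρ).indicator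
          (fun _ => ENNReal.ofReal (k * q * m)) z := by
      rw [lintegral_indicator measurableSet_ball, Measure.restrict_restrict measurableSet_ball,
        Set.inter_eq_left.2 hsub, setLIntegral_const]
    rw [this, ← lintegral_add_right _ (measurable_const.indicator measurableSet_ball)]
    apply setLIntegral_mono' hS
    intro z hz
    have hz' : lam < ‖z‖ := hz
    have hWz := hWle z hz
    have hV1 := hVpos z
    have hV2 := hVpos (iv lam z)
    have hW0 : 0 ≤ W z := by simp only [hW]; positivity
    by_cases hzb : z ∈ Metric.ball z₀ ρ
    · rw [Set.indicator_of_mem hzb, ← ENNReal.ofReal_add (by positivity) (by positivity)]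
      apply ENNReal.ofReal_le_ofReal
      obtain ⟨h1, h2, h3⟩ := hball z hzb
      have hK := kernel_lower hl hp hal z ξ h2.le h3.le hξ
      have h4 : k * q * m ≤ (((‖z‖ / lam) * dist (iv lam z) ξ) ^ p - dist z ξ ^ p) *
          (V z ^ r - W z) := by
        have : 0 < k * q := by positivity
        exact mul_le_mul hK h1.le hmpos.le (le_trans this.le hK)
      linarith
    · rw [Set.indicator_of_notMem hzb, add_zero]
      apply ENNReal.ofReal_le_ofReal
      have hK := kernel_lower hl hp hz' z ξ le_rfl le_rfl hξ
      have hK0 : 0 ≤ ((‖z‖ / lam) * dist (iv lam z) ξ) ^ p - dist z ξ ^ p := by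
        refine le_trans ?_ hK
        have h1 : 0 < ‖z‖ / lam - 1 := by rw [sub_pos, lt_div_iff₀ hl]; linarith
        have h2 : 0 < ‖z‖ ^ 2 - lam ^ 2 := by nlinarith
        positivity
      have := mul_nonneg hK0 (sub_nonneg.2 hWz)
      linarith
  have hfin : volume (Metric.ball z₀ ρ) = ENNReal.ofReal (volume (Metric.ball z₀ ρ)).toReal :=
    (ENNReal.ofReal_toReal measure_ball_lt_top.ne).symm
  rw [hfin, ← ENNReal.ofReal_mul (by positivity), ← ENNReal.ofReal_add (hUpos ξ).le (by positivity),
    ENNReal.ofReal_le_ofReal_iff (by positivity)] at hmain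
  linarith

lemma hopf {n : ℕ} {lam p c : ℝ} (hl : 0 < lam) (hc : 0 < c)
    (U : EuclideanSpace ℝ (Fin n) → ℝ) (hU : ContDiff ℝ (⊤ : ℕ∞) U)
    (hs : ∀ ξ, lam < ‖ξ‖ → U ξ + c * (‖ξ‖ ^ p * (1 - lam ^ 2 / ‖ξ‖ ^ 2)) ≤
      (‖ξ‖ / lam) ^ p * U (iv lam ξ)) (x : EuclideanSpace ℝ (Fin n)) (hx : ‖x‖ = lam) :
    0 < p / 2 * U x - fderiv ℝ U x x := by
  have hd : Differentiable ℝ U := hU.differentiable (by simp)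
  set G : ℝ → ℝ := fun t => t ^ p * U (t⁻¹ • x) - U (t • x) -
    c * lam ^ p * (t ^ p * (1 - (t⁻¹) ^ 2)) with hG
  have hinv : HasDerivAt (fun t : ℝ => t⁻¹) (-1) 1 := by
    simpa using hasDerivAt_inv (one_ne_zero : (1:ℝ) ≠ 0)
  have hpow : HasDerivAt (fun t : ℝ => t ^ p) p 1 := by
    simpa using Real.hasDerivAt_rpow_const (x := 1) (p := p) (Or.inl one_ne_zero)
  have h1 : HasDerivAt (fun t : ℝ => U (t • x)) (fderiv ℝ U x x) 1 := by
    have hlin : HasDerivAt (fun t : ℝ => t • x) x 1 := by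
      simpa using (hasDerivAt_id (1:ℝ)).smul_const x
    have hf : HasFDerivAt U (fderiv ℝ U x) ((1:ℝ) • x) := by
      rw [one_smul]; exact (hd x).hasFDerivAt
    exact hf.comp_hasDerivAt (1:ℝ) hlin
  have h2 : HasDerivAt (fun t : ℝ => U (t⁻¹ • x)) (-(fderiv ℝ U x x)) 1 := by
    have hlin : HasDerivAt (fun t : ℝ => t⁻¹ • x) (-x) 1 := by
      simpa using hinv.smul_const x
    have hf : HasFDerivAt U (fderiv ℝ U x) ((1:ℝ)⁻¹ • x) := by
      rw [inv_one, one_smul]; exact (hd x).hasFDerivAt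
    have h := hf.comp_hasDerivAt (1:ℝ) hlin
    rw [map_neg] at h
    exact h
  have h3 : HasDerivAt (fun t : ℝ => 1 - (t⁻¹) ^ 2) 2 1 := by
    have := (hinv.pow 2).const_sub 1
    simpa using this
  have hGd : HasDerivAt G (p * U x - 2 * fderiv ℝ U x x - 2 * (c * lam ^ p)) 1 := by
    have := ((hpow.mul h2).sub h1).sub ((hpow.mul h3).const_mul (c * lam ^ p))
    refine this.congr_deriv ?_
    simp
    ring
  have hG1 : G 1 = 0 := by simp [hG]
  have hGpos : ∀ t : ℝ, 1 < t → 0 ≤ G t := by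
    intro t ht
    have ht0 : 0 < t := by linarith
    have hn : ‖t • x‖ = t * lam := by rw [norm_smul, hx, Real.norm_of_nonneg ht0.le]
    have h := hs (t • x) (by rw [hn]; nlinarith)
    have hi : iv lam (t • x) = t⁻¹ • x := by
      rw [iv, hn, smul_smul]; congr 1; field_simp
    rw [hi, hn, Real.mul_rpow ht0.le hl.le, mul_div_cancel_right₀ _ hl.ne'] at h
    have e : lam ^ 2 / (t * lam) ^ 2 = (t⁻¹) ^ 2 := by field_simp
    rw [e] at h
    simp only [hG]
    linarith
  have hlim := (hasDerivAt_iff_tendsto_slope.1 hGd).mono_left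
    (nhdsWithin_mono (1:ℝ) (show Set.Ioi (1:ℝ) ⊆ {1}ᶜ from fun t (ht : 1 < t) => ne_of_gt ht))
  have hnn : 0 ≤ p * U x - 2 * fderiv ℝ U x x - 2 * (c * lam ^ p) := by
    refine ge_of_tendsto hlim ?_
    filter_upwards [self_mem_nhdsWithin] with t ht
    have ht' : 1 < t := ht
    rw [slope_def_field, hG1, sub_zero]
    exact div_nonneg (hGpos t ht') (by linarith)
  have : 0 < c * lam ^ p := by positivity
  linarith

lemma continuation {n : ℕ} {lam p c : ℝ} (hl : 0 < lam) (hc : 0 < c)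
    (U : EuclideanSpace ℝ (Fin n) → ℝ) (hU : ContDiff ℝ (⊤ : ℕ∞) U)
    (hs : ∀ ξ, lam < ‖ξ‖ → U ξ + c * (‖ξ‖ ^ p * (1 - lam ^ 2 / ‖ξ‖ ^ 2)) ≤
      (‖ξ‖ / lam) ^ p * U (iv lam ξ)) :
    ∃ δ > 0, ∀ l, lam < l → l < lam + δ → ∀ ξ, l < ‖ξ‖ → U ξ ≤ (‖ξ‖ / l) ^ p * U (iv l ξ) := by
  have hd : Differentiable ℝ U := hU.differentiable (by simp)
  have hUc : Continuous U := hU.continuous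
  have hfc : Continuous (fderiv ℝ U) := hU.continuous_fderiv (by simp)
  set h : EuclideanSpace ℝ (Fin n) → ℝ := fun x => p / 2 * U x - fderiv ℝ U x x with hh
  have hhc : Continuous h := (continuous_const.mul hUc).sub (hfc.clm_apply continuous_id)
  obtain ⟨δ₀, hδ₀, hthick⟩ := (isCompact_sphere (0 : EuclideanSpace ℝ (Fin n)) lam)
    |>.exists_thickening_subset_open (isOpen_lt continuous_const hhc : IsOpen {x | 0 < h x})
    (fun x hx => hopf hl hc U hU hs x (by simpa using hx))
  set δ := min δ₀ (lam / 2) with hδ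
  have hδpos : 0 < δ := by positivity
  have hδ1 : δ ≤ δ₀ := min_le_left _ _
  have hδ2 : δ ≤ lam / 2 := min_le_right _ _
  have hhpos : ∀ x, lam - δ < ‖x‖ → ‖x‖ < lam + δ → 0 < h x := by
    intro x hx1 hx2
    apply hthick
    rw [Metric.mem_thickening_iff]
    have hx0 : 0 < ‖x‖ := by linarith
    refine ⟨(lam / ‖x‖) • x, ?_, ?_⟩
    · simp [norm_smul, abs_of_pos hl, hx0.ne']
    · have : x - (lam / ‖x‖) • x = (1 - lam / ‖x‖) • x := by rw [sub_smul, one_smul]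
      rw [dist_eq_norm, this, norm_smul, Real.norm_eq_abs, ← abs_of_pos hx0, ← abs_mul,
        abs_of_pos hx0, sub_mul, one_mul, div_mul_cancel₀ _ hx0.ne', abs_lt]
      constructor <;> linarith
  -- near the boundary
  have hnear : ∀ l, lam < l → ∀ ξ, l < ‖ξ‖ → ‖ξ‖ < lam + δ →
      U ξ ≤ (‖ξ‖ / l) ^ p * U (iv l ξ) := by
    intro l hl1 ξ hξ1 hξ2
    have hl0 : 0 < l := hl.trans hl1
    have hR : 0 < ‖ξ‖ := hl0.trans hξ1
    set R := ‖ξ‖ with hRdef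
    set e := R⁻¹ • ξ with he
    have hen : ‖e‖ = 1 := by
      rw [he, norm_smul, norm_inv, Real.norm_of_nonneg hR.le, ← hRdef, inv_mul_cancel₀ hR.ne']
    set φ : ℝ → ℝ := fun t => t ^ (-(p / 2)) * U (t • e) with hφ
    have hφd : ∀ t, 0 < t → HasDerivAt φ (-(t ^ (-(p / 2) - 1) * h (t • e))) t := by
      intro t ht
      have hpow := Real.hasDerivAt_rpow_const (x := t) (p := -(p / 2)) (Or.inl ht.ne')
      have hlin : HasDerivAt (fun t : ℝ => t • e) e t := by
        simpa using (hasDerivAt_id t).smul_const e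
      have h1 := ((hd (t • e)).hasFDerivAt).comp_hasDerivAt t hlin
      refine (hpow.mul h1).congr_deriv ?_
      simp only [hh, map_smul, smul_eq_mul, Function.comp_apply]
      have : t ^ (-(p / 2)) = t ^ (-(p / 2) - 1) * t := by
        rw [Real.rpow_sub_one ht.ne', div_mul_cancel₀ _ ht.ne']
      rw [this]
      ring
    have hanti : StrictAntiOn φ (Set.Ioo (lam - δ) (lam + δ)) := by
      apply strictAntiOn_of_deriv_neg (convex_Ioo _ _)
      · intro t ht
        have : 0 < t := by have := ht.1; linarith
        exact (hφd t this).continuousAt.continuousWithinAt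
      · intro t ht
        rw [interior_Ioo] at ht
        have ht0 : 0 < t := by have := ht.1; linarith
        rw [(hφd t ht0).deriv]
        have hn : ‖t • e‖ = t := by rw [norm_smul, hen, mul_one, Real.norm_of_nonneg ht0.le]
        have := hhpos (t • e) (by rw [hn]; exact ht.1) (by rw [hn]; exact ht.2)
        have h2 : 0 < t ^ (-(p / 2) - 1) := Real.rpow_pos_of_pos ht0 _
        have := mul_pos h2 this
        linarith
    have hlt : l ^ 2 / R < R := by rw [div_lt_iff₀ hR]; nlinarith
    have hgt : lam - δ < l ^ 2 / R := by rw [lt_div_iff₀ hR]; nlinarith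
    have hcmp := hanti (a := l ^ 2 / R) (b := R) ⟨hgt, by linarith⟩ ⟨by linarith, hξ2⟩ hlt
    simp only [hφ] at hcmp
    have e1 : R • e = ξ := by rw [he, smul_smul, mul_inv_cancel₀ hR.ne', one_smul]
    have e2 : (l ^ 2 / R) • e = iv l ξ := by
      rw [he, smul_smul, iv, ← hRdef]; congr 1; field_simp
    rw [e1, e2] at hcmp
    have e3 : R ^ (p / 2) * R ^ (-(p / 2)) = 1 := by
      rw [← Real.rpow_add hR]; simp
    have e4 : R ^ (p / 2) * (l ^ 2 / R) ^ (-(p / 2)) = (R / l) ^ p := by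
      rw [Real.rpow_neg (by positivity), ← Real.inv_rpow (by positivity),
        ← Real.mul_rpow hR.le (by positivity)]
      rw [show R * (l ^ 2 / R)⁻¹ = (R / l) ^ 2 by field_simp, ← Real.rpow_natCast,
        ← Real.rpow_mul (by positivity)]
      congr 1; push_cast; ring
    have hRp : 0 < R ^ (p / 2) := Real.rpow_pos_of_pos hR _
    have := mul_lt_mul_of_pos_left hcmp hRp
    rw [← mul_assoc, ← mul_assoc, e3, e4, one_mul] at this
    exact this.le
  -- far from the boundary
  set c₀ := c * (1 - lam ^ 2 / (lam + δ) ^ 2) with hc₀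
  have hc₀pos : 0 < c₀ := by
    have : 0 < 1 - lam ^ 2 / (lam + δ) ^ 2 := by
      rw [sub_pos, div_lt_one (by positivity)]; gcongr; linarith
    positivity
  have hfar : ∀ᶠ l in nhds lam, ∀ y ∈ Metric.closedBall (0 : EuclideanSpace ℝ (Fin n)) lam⁻¹,
      (lam ^ p)⁻¹ * U (lam ^ 2 • y) - c₀ < (l ^ p)⁻¹ * U (l ^ 2 • y) := by
    apply IsCompact.eventually_forall_of_forall_eventually (isCompact_closedBall _ _)
    intro y _
    have hc1 : ContinuousAt (fun z : ℝ × EuclideanSpace ℝ (Fin n) =>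
        (lam ^ p)⁻¹ * U (lam ^ 2 • z.2) - c₀) (lam, y) := by
      apply Continuous.continuousAt; fun_prop
    have hc2 : ContinuousAt (fun z : ℝ × EuclideanSpace ℝ (Fin n) =>
        (z.1 ^ p)⁻¹ * U (z.1 ^ 2 • z.2)) (lam, y) := by
      refine ContinuousAt.mul ?_ (Continuous.continuousAt (by fun_prop))
      exact (continuousAt_fst.rpow_const (Or.inl hl.ne')).inv₀ (Real.rpow_pos_of_pos hl p).ne'
    exact hc1.eventually_lt hc2 (by simpa using hc₀pos)
  obtain ⟨ε, hε, hfar⟩ := Metric.eventually_nhds_iff.1 hfar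
  refine ⟨min ε δ, by positivity, ?_⟩
  intro l hl1 hl2 ξ hξ
  have hl0 : 0 < l := hl.trans hl1
  have hlε : l < lam + ε := lt_of_lt_of_le hl2 (by gcongr; exact min_le_left _ _)
  rcases lt_or_ge ‖ξ‖ (lam + δ) with hcase | hcase
  · exact hnear l hl1 ξ hξ hcase
  · have hR : 0 < ‖ξ‖ := hl0.trans hξ
    have hRp : 0 < ‖ξ‖ ^ p := Real.rpow_pos_of_pos hR p
    have hy : (‖ξ‖ ^ 2)⁻¹ • ξ ∈ Metric.closedBall (0 : EuclideanSpace ℝ (Fin n)) lam⁻¹ := by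
      rw [mem_closedBall_zero_iff, norm_smul, norm_inv, norm_pow, norm_norm]
      rw [show (‖ξ‖ ^ 2)⁻¹ * ‖ξ‖ = ‖ξ‖⁻¹ by field_simp]
      gcongr; linarith
    have h1 := hfar (y := l) (by rw [Real.dist_eq, abs_lt]; constructor <;> linarith) _ hy
    have hiv : ∀ s : ℝ, s ^ 2 • (‖ξ‖ ^ 2)⁻¹ • ξ = iv s ξ := by
      intro s; rw [iv, smul_smul, div_eq_mul_inv]
    rw [hiv, hiv] at h1
    have h2 := hs ξ (by linarith)
    have h3 : c₀ ≤ c * (1 - lam ^ 2 / ‖ξ‖ ^ 2) := by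
      rw [hc₀]; gcongr
    have h4 := mul_lt_mul_of_pos_left h1 hRp
    have h5 := mul_le_mul_of_nonneg_left h3 hRp.le
    rw [Real.div_rpow hR.le hl.le, div_eq_mul_inv (‖ξ‖ ^ p)] at h2
    rw [Real.div_rpow hR.le hl0.le, div_eq_mul_inv (‖ξ‖ ^ p)]
    linarith

lemma stop_at_zero {n : ℕ} (hn : 1 ≤ n) {lam p r : ℝ} (hl : 0 < lam) (hp : 0 < p)
    (hr : r * p = -(2 * n + p))
    (U V : EuclideanSpace ℝ (Fin n) → ℝ)
    (hU : ContDiff ℝ (⊤ : ℕ∞) U) (hV : ContDiff ℝ (⊤ : ℕ∞) V)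
    (hUpos : ∀ x, 0 < U x) (hVpos : ∀ x, 0 < V x)
    (hUeq : ∀ y, ENNReal.ofReal (U y) = ∫⁻ x, ENNReal.ofReal (dist x y ^ p * V x ^ r))
    (hVeq : ∀ y, ENNReal.ofReal (V y) = ∫⁻ x, ENNReal.ofReal (dist x y ^ p * U x ^ r))
    (hbelow : ∀ l, 0 < l → l < lam → ∀ ξ : EuclideanSpace ℝ (Fin n), l < ‖ξ‖ →
      U ξ ≤ (‖ξ‖ / l) ^ p * U (iv l ξ) ∧ V ξ ≤ (‖ξ‖ / l) ^ p * V (iv l ξ))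
    (habove : ∀ δ > 0, ¬ ∀ l, 0 < l → l < lam + δ → ∀ ξ : EuclideanSpace ℝ (Fin n), l < ‖ξ‖ →
      U ξ ≤ (‖ξ‖ / l) ^ p * U (iv l ξ) ∧ V ξ ≤ (‖ξ‖ / l) ^ p * V (iv l ξ)) :
    ∀ ξ : EuclideanSpace ℝ (Fin n), ξ ≠ 0 →
      (‖ξ‖ / lam) ^ p * U (iv lam ξ) = U ξ ∧ (‖ξ‖ / lam) ^ p * V (iv lam ξ) = V ξ := by
  -- the inequality at the limit
  have hlim : ∀ F : EuclideanSpace ℝ (Fin n) → ℝ, Continuous F → (∀ l, 0 < l → l < lam →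
      ∀ ξ : EuclideanSpace ℝ (Fin n), l < ‖ξ‖ → F ξ ≤ (‖ξ‖ / l) ^ p * F (iv l ξ)) →
      ∀ ξ : EuclideanSpace ℝ (Fin n), lam < ‖ξ‖ → F ξ ≤ (‖ξ‖ / lam) ^ p * F (iv lam ξ) := by
    intro F hF hb ξ hξ
    have hc : ContinuousAt (fun l : ℝ => (‖ξ‖ / l) ^ p * F (iv l ξ)) lam := by
      refine ContinuousAt.mul ?_ ?_
      · exact (continuousAt_const.div continuousAt_id hl.ne').rpow_const (Or.inr hp.le)
      · unfold iv
        apply Continuous.continuousAt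
        fun_prop
    refine ge_of_tendsto (hc.tendsto.mono_left (nhdsWithin_le_nhds (s := Set.Iio lam))) ?_
    filter_upwards [Ioo_mem_nhdsLT hl] with l hl'
    exact hb l hl'.1 hl'.2 ξ (hl'.2.trans hξ)
  have hUle := hlim U hU.continuous fun l h1 h2 ξ h3 => (hbelow l h1 h2 ξ h3).1
  have hVle := hlim V hV.continuous fun l h1 h2 ξ h3 => (hbelow l h1 h2 ξ h3).2
  -- strictness of both functions is impossible
  have hno : ¬ ((∃ c > 0, ∀ ξ, lam < ‖ξ‖ → U ξ + c * (‖ξ‖ ^ p * (1 - lam ^ 2 / ‖ξ‖ ^ 2)) ≤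
      (‖ξ‖ / lam) ^ p * U (iv lam ξ)) ∧ (∃ c > 0, ∀ ξ, lam < ‖ξ‖ →
      V ξ + c * (‖ξ‖ ^ p * (1 - lam ^ 2 / ‖ξ‖ ^ 2)) ≤ (‖ξ‖ / lam) ^ p * V (iv lam ξ))) := by
    rintro ⟨⟨c₁, hc₁, h₁⟩, ⟨c₂, hc₂, h₂⟩⟩
    obtain ⟨δ₁, hδ₁, k₁⟩ := continuation hl hc₁ U hU h₁
    obtain ⟨δ₂, hδ₂, k₂⟩ := continuation hl hc₂ V hV h₂
    refine habove (min δ₁ δ₂) (lt_min hδ₁ hδ₂) ?_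
    intro l hl0 hl1 ξ hξ
    rcases lt_trichotomy l lam with h | h | h
    · exact hbelow l hl0 h ξ hξ
    · subst h
      exact ⟨hUle ξ hξ, hVle ξ hξ⟩
    · exact ⟨k₁ l h (hl1.trans_le (by gcongr; exact min_le_left _ _)) ξ hξ,
        k₂ l h (hl1.trans_le (by gcongr; exact min_le_right _ _)) ξ hξ⟩
  have hgap : ∀ {c : ℝ}, 0 < c → ∀ ξ : EuclideanSpace ℝ (Fin n), lam < ‖ξ‖ →
      0 < c * (‖ξ‖ ^ p * (1 - lam ^ 2 / ‖ξ‖ ^ 2)) := by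
    intro c hc ξ hξ
    have h0 : 0 < ‖ξ‖ := hl.trans hξ
    have : 0 < 1 - lam ^ 2 / ‖ξ‖ ^ 2 := by
      rw [sub_pos, div_lt_one (by positivity)]; gcongr
    positivity
  have hout : ∀ ξ : EuclideanSpace ℝ (Fin n), lam < ‖ξ‖ →
      (‖ξ‖ / lam) ^ p * U (iv lam ξ) = U ξ ∧ (‖ξ‖ / lam) ^ p * V (iv lam ξ) = V ξ := by
    intro ξ hξ
    constructor
    · by_contra hne
      have hlt := lt_of_le_of_ne (hUle ξ hξ) (Ne.symm hne)
      have hA := key hn hl hp hr V U hU.continuous hVpos hUpos hVeq hUle ξ hξ hlt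
      obtain ⟨c, hc, hA'⟩ := id hA
      have hlt2 : V ξ < (‖ξ‖ / lam) ^ p * V (iv lam ξ) := by
        have := hA' ξ hξ
        have := hgap hc ξ hξ
        linarith
      exact hno ⟨key hn hl hp hr U V hV.continuous hUpos hVpos hUeq hVle ξ hξ hlt2, hA⟩
    · by_contra hne
      have hlt := lt_of_le_of_ne (hVle ξ hξ) (Ne.symm hne)
      have hA := key hn hl hp hr U V hV.continuous hUpos hVpos hUeq hVle ξ hξ hlt
      obtain ⟨c, hc, hA'⟩ := id hA
      have hlt2 : U ξ < (‖ξ‖ / lam) ^ p * U (iv lam ξ) := by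
        have := hA' ξ hξ
        have := hgap hc ξ hξ
        linarith
      exact hno ⟨hA, key hn hl hp hr V U hU.continuous hVpos hUpos hVeq hUle ξ hξ hlt2⟩
  intro ξ hξ
  have h0 : 0 < ‖ξ‖ := by simpa using hξ
  rcases lt_trichotomy lam ‖ξ‖ with h | h | h
  · exact hout ξ h
  · have : iv lam ξ = ξ := by
      rw [iv, ← h, div_self (by positivity), one_smul]
    rw [this, ← h, div_self hl.ne', Real.one_rpow, one_mul, one_mul]
    exact ⟨rfl, rfl⟩
  · have hb : lam < ‖iv lam ξ‖ := by
      rw [norm_iv, lt_div_iff₀ h0]; nlinarith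
    have hh := hout (iv lam ξ) hb
    rw [iv_iv hl, norm_iv] at hh
    have e : (‖ξ‖ / lam) ^ p * (lam ^ 2 / ‖ξ‖ / lam) ^ p = 1 := by
      rw [← Real.mul_rpow (by positivity) (by positivity)]
      rw [show ‖ξ‖ / lam * (lam ^ 2 / ‖ξ‖ / lam) = 1 by field_simp, Real.one_rpow]
    rw [← hh.1, ← hh.2, ← mul_assoc, ← mul_assoc, e, one_mul, one_mul]
    exact ⟨rfl, rfl⟩

/-- **If the moving sphere procedure stops, the solutions are conformally invariant**
(Lemma 3.8): for `1 ≤ n < α` and `θ = κ = (n+α)/(n-α)`, with `(u, v)` positive finite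
smooth solutions of the integral system, if
`λ̄(x₀) = sup { μ > 0 : u_{x₀,λ} ≥ u and v_{x₀,λ} ≥ v on Σ_{x₀,λ} for all λ ∈ (0, μ) }`
is finite (here formalized as: `lamBar` is the least upper bound of that set),
then `u_{x₀,λ̄} = u` and `v_{x₀,λ̄} = v` away from `x₀`. -/
theorem moving_sphere_stop (n : ℕ) (hn : 1 ≤ n) (α : ℝ)
    (hα : (n : ℝ) < α)
    (u v : EuclideanSpace ℝ (Fin n) → ℝ)
    (husmooth : ContDiff ℝ (⊤ : ℕ∞) u) (hvsmooth : ContDiff ℝ (⊤ : ℕ∞) v)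
    (hupos : ∀ y, 0 < u y) (hvpos : ∀ x, 0 < v x)
    (hueq : ∀ y, ENNReal.ofReal (u y) =
      ∫⁻ x, ENNReal.ofReal (dist x y ^ (α - n) * v x ^ (((n : ℝ) + α) / ((n : ℝ) - α))))
    (hveq : ∀ x, ENNReal.ofReal (v x) =
      ∫⁻ y, ENNReal.ofReal (dist x y ^ (α - n) * u y ^ (((n : ℝ) + α) / ((n : ℝ) - α))))
    (x₀ : EuclideanSpace ℝ (Fin n)) (lamBar : ℝ)
    (hlub : IsLUB {μ : ℝ | 0 < μ ∧ ∀ lam : ℝ, 0 < lam → lam < μ →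
      ∀ ξ : EuclideanSpace ℝ (Fin n), lam < dist ξ x₀ →
        u ξ ≤ kelvin n α u x₀ lam ξ ∧ v ξ ≤ kelvin n α v x₀ lam ξ} lamBar) :
    ∀ ξ : EuclideanSpace ℝ (Fin n), ξ ≠ x₀ →
      kelvin n α u x₀ lamBar ξ = u ξ ∧ kelvin n α v x₀ lamBar ξ = v ξ := by
  have hp : 0 < α - n := by linarith
  have hk : ∀ (ω : EuclideanSpace ℝ (Fin n) → ℝ) (lam : ℝ) (y : EuclideanSpace ℝ (Fin n)),
      0 < lam → kelvin n α ω x₀ lam (x₀ + y) =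
        (‖y‖ / lam) ^ (α - n) * (fun z => ω (x₀ + z)) (iv lam y) := by
    intro ω lam y hlam
    have hd : dist (x₀ + y) x₀ = ‖y‖ := by simp [dist_eq_norm]
    simp only [kelvin, iv]
    rw [hd, add_sub_cancel_left]
    congr 1
    rw [← neg_sub α (n : ℝ), Real.rpow_neg (by positivity), ← Real.inv_rpow (by positivity), inv_div]
  -- `lamBar` is positive
  have hne : {μ : ℝ | 0 < μ ∧ ∀ lam : ℝ, 0 < lam → lam < μ →
      ∀ ξ : EuclideanSpace ℝ (Fin n), lam < dist ξ x₀ →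
        u ξ ≤ kelvin n α u x₀ lam ξ ∧ v ξ ≤ kelvin n α v x₀ lam ξ}.Nonempty := hlub.nonempty
  have hl : 0 < lamBar := by
    obtain ⟨μ, hμ⟩ := hne
    exact hμ.1.trans_le (hlub.1 hμ)
  have htr : ∀ f g : EuclideanSpace ℝ (Fin n) → ℝ, ∀ r : ℝ, (∀ y, ENNReal.ofReal (f y) =
      ∫⁻ x, ENNReal.ofReal (dist x y ^ (α - n) * g x ^ r)) → ∀ y, ENNReal.ofReal (f (x₀ + y)) =
      ∫⁻ x, ENNReal.ofReal (dist x y ^ (α - n) * g (x₀ + x) ^ r) := by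
    intro f g r h y
    rw [h, ← lintegral_add_left_eq_self _ x₀]
    simp only [dist_add_left]
  have hmain := stop_at_zero hn (lam := lamBar) (p := α - n)
    (r := ((n : ℝ) + α) / ((n : ℝ) - α)) hl hp
    (by
      have : (n : ℝ) - α ≠ 0 := by linarith
      field_simp
      ring)
    (fun y => u (x₀ + y)) (fun y => v (x₀ + y))
    (husmooth.comp (contDiff_const.add contDiff_id)) (hvsmooth.comp (contDiff_const.add contDiff_id))
    (fun y => hupos _) (fun y => hvpos _)
    (htr u v _ hueq)
    (htr v u _ (by
      intro x
      rw [hveq x]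
      simp only [dist_comm x]))
    (by
      intro l hl0 hl1 y hy
      obtain ⟨μ, hμ, hlμ, _⟩ := hlub.exists_between hl1
      have := hμ.2 l hl0 hlμ (x₀ + y) (by simpa [dist_eq_norm] using hy)
      rwa [hk _ _ _ hl0, hk _ _ _ hl0] at this)
    (by
      intro δ hδ hcon
      have hmem : lamBar + δ ∈ {μ : ℝ | 0 < μ ∧ ∀ lam : ℝ, 0 < lam → lam < μ →
          ∀ ξ : EuclideanSpace ℝ (Fin n), lam < dist ξ x₀ →
          u ξ ≤ kelvin n α u x₀ lam ξ ∧ v ξ ≤ kelvin n α v x₀ lam ξ} := by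
        refine ⟨by linarith, ?_⟩
        intro l hl0 hl1 ξ hξ
        have := hcon l hl0 hl1 (ξ - x₀) (by rwa [← dist_eq_norm])
        rw [← hk _ _ _ hl0, ← hk _ _ _ hl0] at this
        simpa using this
      have := hlub.1 hmem
      linarith)
  intro ξ hξ
  have := hmain (ξ - x₀) (sub_ne_zero.2 hξ)
  rw [← hk _ _ _ hl, ← hk _ _ _ hl] at this
  simpa using this
end
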